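/- Nondegeneracy on Kirchhoff stream functions, II. Define for ξ > 0 the function Ψ^ξ : ℝ² → ℝ by Ψ^ξ(x) = (1/2π)∫_{E^ξ} log‖x−y‖ dy − Ω^ξ‖x‖²/2. There exists an at most countable set 𝒩 ⊆ (0,∞) such that for every ξ ∈ (0,∞) ∖ 𝒩 the following holds: if φ : Σ^ξ → ℝ is continuous, satisfies the 2-fold dihedral symmetry φ(x₁,x₂) = φ(x₁,−x₂) = φ(−x₁,−x₂) for all (x₁,x₂) ∈ Σ^ξ, and satisfies φ(x) + ∫_{Σ^ξ} (1/2π) log‖x−y‖ · (φ(y)/‖∇Ψ^ξ(y)‖) dℋ¹(y) = 0 for all x ∈ Σ^ξ, then φ is identically zero. -/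

import Mathlib

open MeasureTheory Real

noncomputable section

/-- The Euclidean plane. -/
abbrev Pt := EuclideanSpace ℝ (Fin 2)

/-- The point of the plane with the given coordinates. -/
def pt (a b : ℝ) : Pt := (WithLp.equiv 2 (Fin 2 → ℝ)).symm ![a, b]

/-- The open ellipse `E^ξ = {x : x₁² + (x₂ / tanh ξ)² < 1}`. -/
def Eell (ξ : ℝ) : Set Pt := {x : Pt | (x 0) ^ 2 + (x 1 / Real.tanh ξ) ^ 2 < 1}

/-- The angular velocity `Ω^ξ = tanh ξ / (1 + tanh ξ)²` of the `ξ`-Kirchhoff vortex. -/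
def Ωell (ξ : ℝ) : ℝ := Real.tanh ξ / (1 + Real.tanh ξ) ^ 2

/-- The elliptical coordinates map
`(ζ, η) ↦ (sech ξ · cosh ζ · cos η, sech ξ · sinh ζ · sin η)`. -/
def ept (ξ ζ η : ℝ) : Pt :=
  pt ((Real.cosh ξ)⁻¹ * Real.cosh ζ * Real.cos η)
    ((Real.cosh ξ)⁻¹ * Real.sinh ζ * Real.sin η)

/-- The relative stream function of the `ξ`-Kirchhoff vortex (without the
additive normalization constant). -/
def Ψell (ξ : ℝ) (x : Pt) : ℝ :=
  (1 / (2 * π)) * (∫ y in Eell ξ, Real.log ‖x - y‖) - Ωell ξ * ‖x‖ ^ 2 / 2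

/-!
Put `b = tanh ξ`, `q = (1 - b) / (1 + b)` and parametrise `Σ^ξ` by `γ t = (cos t, b sin t)`. The
gradient of the logarithmic potential at a boundary point, computed in polar coordinates about that
point, shows that arclength speed divided by `‖∇Ψ^ξ‖` is the constant `(1 + b)² / b`. Moreover
`‖γ s - γ t‖ = 2 |sin ((s - t) / 2)| · (1 + b) / 2 · |1 - q e^{i (s + t)}|`, and evenness of `φ`
turns `s + t` into `s - t`, so the equation is a convolution equation on the circle, diagonalised by
the Fourier basis. For `n ≥ 1` the `n`-th multiplier vanishes only if `n (1 - q²) = 2 (1 + qⁿ)`, a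
nontrivial polynomial equation; for `n = 0` it vanishes only if `1 - q² = 4 log (1 + q)`, which by
monotonicity has at most one solution. Hence only countably many `ξ` admit a zero multiplier.
-/

open Set Filter
open scoped Topology NNReal ENNReal

section ArcLength

lemma hausdorffMeasure_image_iUnion {X : Type*} [EMetricSpace X] [MeasurableSpace X] [BorelSpace X]
    {γ : ℝ → X} {ι : Type*} [Countable ι] {u : ι → Set ℝ}
    (hu : ∀ i, MeasurableSet (u i)) (hdisj : Pairwise (Function.onFun Disjoint u))
    (hcont : ContinuousOn γ (⋃ i, u i)) (hinj : InjOn γ (⋃ i, u i)) :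
    μH[1] (γ '' ⋃ i, u i) = ∑' i, μH[1] (γ '' u i) := by
  rw [image_iUnion, measure_iUnion]
  · exact fun i j hij =>
      (hdisj hij).image hinj (subset_iUnion u i) (subset_iUnion u j)
  · exact fun i => (hu i).image_of_continuousOn_injOn (hcont.mono (subset_iUnion u i))
      (hinj.mono (subset_iUnion u i))

variable {E : Type*} [NormedAddCommGroup E] [NormedSpace ℝ E] {γ γ' : ℝ → E} {s : Set ℝ}
  {A : ℝ →L[ℝ] E} {δ : ℝ≥0}

lemma norm_map_eq_abs_mul (A : ℝ →L[ℝ] E) (t : ℝ) : ‖A t‖ = |t| * ‖A 1‖ := by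
  rw [← mul_one t, ← smul_eq_mul, map_smul, norm_smul, norm_eq_abs, smul_eq_mul, mul_one]

lemma norm_deriv_sub_le_of_approximatesLinearOn
    (h : ApproximatesLinearOn γ A s δ) {t : ℝ} {v : E} (ht : t ∈ s) [(𝓝[s \ {t}] t).NeBot]
    (hγ : HasDerivWithinAt γ v s t) : ‖v - A 1‖ ≤ δ := by
  have hslope := (hasDerivWithinAt_iff_tendsto_slope.1 hγ).sub_const (A 1)
  refine le_of_tendsto hslope.norm ?_
  filter_upwards [self_mem_nhdsWithin] with x hx
  have hxt : x - t ≠ 0 := sub_ne_zero.2 hx.2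
  have hA : A 1 = (x - t)⁻¹ • A (x - t) := by
    rw [← map_smul, smul_eq_mul, inv_mul_cancel₀ hxt]
  rw [slope_def_module, hA, ← smul_sub, norm_smul, norm_inv,
    inv_mul_le_iff₀ (norm_pos_iff.2 hxt), mul_comm]
  exact h x hx.1 t ht

lemma ae_enorm_deriv_sub_le_of_approximatesLinearOn (hs : MeasurableSet s)
    (h : ApproximatesLinearOn γ A s δ) (hγ : ∀ t ∈ s, HasDerivWithinAt γ (γ' t) s t) :
    ∀ᵐ t ∂volume.restrict s, ‖γ' t - A 1‖ₑ ≤ δ := by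
  have hisolated : {t | t ∈ s ∧ 𝓝[s ∩ Ioi t] t = ⊥}.Countable :=
    countable_setOfPred_isolated_right_within
  filter_upwards [ae_restrict_mem hs, ae_restrict_of_ae (hisolated.ae_notMem volume)] with t ht hlim
  have : (𝓝[s ∩ Ioi t] t).NeBot := ⟨fun hbot => hlim ⟨ht, hbot⟩⟩
  have : (𝓝[s \ {t}] t).NeBot :=
    this.mono (nhdsWithin_mono t fun x hx => ⟨hx.1, hx.2.ne'⟩)
  exact enorm_le_coe.2 (norm_deriv_sub_le_of_approximatesLinearOn h ht (hγ t ht))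

variable [MeasurableSpace E] [BorelSpace E]

lemma hausdorffMeasure_image_le_of_approximatesLinearOn (h : ApproximatesLinearOn γ A s δ) :
    μH[1] (γ '' s) ≤ (‖A 1‖ₑ + δ) * volume s := by
  have hlip : LipschitzOnWith (‖A 1‖₊ + δ) γ s := by
    refine LipschitzOnWith.of_dist_le_mul fun x hx y hy => ?_
    have hA := norm_map_eq_abs_mul A (x - y)
    have hγ := h x hx y hy
    have htri := norm_sub_norm_le (γ x - γ y) (A (x - y))
    rw [dist_eq_norm, dist_eq, NNReal.coe_add, coe_nnnorm]
    rw [norm_eq_abs (x - y)] at hγ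
    linarith
  simpa only [ENNReal.rpow_one, hausdorffMeasure_real, ENNReal.coe_add, enorm_eq_nnnorm] using
    hlip.hausdorffMeasure_image_le zero_le_one

lemma volume_le_hausdorffMeasure_image_of_approximatesLinearOn
    (h : ApproximatesLinearOn γ A s δ) :
    ‖A 1‖ₑ * volume s ≤ μH[1] (γ '' s) + δ * volume s := by
  rcases le_or_gt ‖A 1‖₊ δ with hle | hlt
  · exact (mul_le_mul_left (ENNReal.coe_le_coe.2 hle) _).trans le_add_self
  set c : ℝ≥0 := ‖A 1‖₊ - δ with hc
  have hc₀ : c ≠ 0 := (tsub_pos_of_lt hlt).ne'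
  have hanti : AntilipschitzWith c⁻¹ (s.domRestrict γ) := by
    refine AntilipschitzWith.of_le_mul_dist fun x y => ?_
    have hA := norm_map_eq_abs_mul A (x - y : ℝ)
    have hγ := h x x.2 y y.2
    have htri := norm_sub_norm_le (A (x - y : ℝ)) (γ x - γ y)
    rw [norm_sub_rev (A _)] at htri
    rw [Subtype.dist_eq, dist_eq, dist_eq_norm, NNReal.coe_inv, ← div_eq_inv_mul,
      le_div_iff₀ (by positivity), hc, NNReal.coe_sub hlt.le, coe_nnnorm]
    rw [norm_eq_abs (x - y : ℝ)] at hγ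
    simp only [domRestrict_apply]
    linarith
  have hvol : volume s ≤ (c : ℝ≥0∞)⁻¹ * μH[1] (γ '' s) := by
    have := hanti.le_hausdorffMeasure_image zero_le_one univ (d := 1)
    rwa [← isometry_subtype_coe.hausdorffMeasure_image (Or.inl zero_le_one), image_univ,
      image_univ, range_domRestrict, Subtype.range_coe, hausdorffMeasure_real, ENNReal.rpow_one,
      ENNReal.coe_inv hc₀] at this
  calc ‖A 1‖ₑ * volume s = c * volume s + δ * volume s := by
        rw [← add_mul, ← ENNReal.coe_add, hc, tsub_add_cancel_of_le hlt.le, enorm_eq_nnnorm]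
    _ ≤ μH[1] (γ '' s) + δ * volume s := by
        gcongr
        exact (ENNReal.mul_le_iff_le_inv (ENNReal.coe_ne_zero.2 hc₀) ENNReal.coe_ne_top).2 hvol

lemma hausdorffMeasure_image_and_lintegral_close_of_approximatesLinearOn (hs : MeasurableSet s)
    (h : ApproximatesLinearOn γ A s δ) (hγ : ∀ t ∈ s, HasDerivWithinAt γ (γ' t) s t) :
    μH[1] (γ '' s) ≤ (∫⁻ t in s, ‖γ' t‖ₑ) + 2 * δ * volume s ∧
      ∫⁻ t in s, ‖γ' t‖ₑ ≤ μH[1] (γ '' s) + 2 * δ * volume s := by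
  have hclose := ae_enorm_deriv_sub_le_of_approximatesLinearOn hs h hγ
  have hconst (c : ℝ≥0∞) : ∫⁻ _ in s, c = c * volume s := setLIntegral_const s c
  have hlower : ‖A 1‖ₑ * volume s ≤ (∫⁻ t in s, ‖γ' t‖ₑ) + δ * volume s := by
    rw [← hconst, ← hconst, ← lintegral_add_right _ measurable_const]
    refine lintegral_mono_ae (hclose.mono fun t ht => ?_)
    have := enorm_sub_le (a := γ' t) (b := γ' t - A 1)
    rw [sub_sub_cancel] at this
    exact this.trans (by gcongr)
  have hupper : ∫⁻ t in s, ‖γ' t‖ₑ ≤ ‖A 1‖ₑ * volume s + δ * volume s := by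
    rw [← add_mul, ← hconst]
    refine lintegral_mono_ae (hclose.mono fun t ht => ?_)
    have := enorm_add_le (A 1) (γ' t - A 1)
    rw [add_sub_cancel] at this
    exact this.trans (by gcongr)
  constructor
  · calc μH[1] (γ '' s) ≤ ‖A 1‖ₑ * volume s + δ * volume s := by
          rw [← add_mul]; exact hausdorffMeasure_image_le_of_approximatesLinearOn h
      _ ≤ (∫⁻ t in s, ‖γ' t‖ₑ) + δ * volume s + δ * volume s := by gcongr
      _ = (∫⁻ t in s, ‖γ' t‖ₑ) + 2 * δ * volume s := by ring
  · calc ∫⁻ t in s, ‖γ' t‖ₑ ≤ ‖A 1‖ₑ * volume s + δ * volume s := hupper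
      _ ≤ μH[1] (γ '' s) + δ * volume s + δ * volume s := by
          gcongr; exact volume_le_hausdorffMeasure_image_of_approximatesLinearOn h
      _ = μH[1] (γ '' s) + 2 * δ * volume s := by ring

variable [SecondCountableTopology E]

lemma hausdorffMeasure_image_and_lintegral_close (hs : MeasurableSet s)
    (hγ : ∀ t ∈ s, HasDerivWithinAt γ (γ' t) s t) (hinj : InjOn γ s) (hδ : δ ≠ 0) :
    μH[1] (γ '' s) ≤ (∫⁻ t in s, ‖γ' t‖ₑ) + 2 * δ * volume s ∧
      ∫⁻ t in s, ‖γ' t‖ₑ ≤ μH[1] (γ '' s) + 2 * δ * volume s := by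
  obtain ⟨u, A, hdisj, hu, hcover, happrox, -⟩ :=
    exists_partition_approximatesLinearOn_of_hasFDerivWithinAt γ s _
      (fun t ht => (hγ t ht).hasFDerivWithinAt) (fun _ => δ) fun _ => hδ
  have hs_eq : s = ⋃ n, s ∩ u n := by rw [← inter_iUnion, inter_eq_left.2 hcover]
  have hmeas (n : ℕ) : MeasurableSet (s ∩ u n) := hs.inter (hu n)
  have hdisj' : Pairwise (Function.onFun Disjoint fun n => s ∩ u n) := fun i j hij =>
    (hdisj hij).mono inter_subset_right inter_subset_right
  have hcont : ContinuousOn γ s := fun t ht => (hγ t ht).continuousWithinAt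
  have hpiece (n : ℕ) := hausdorffMeasure_image_and_lintegral_close_of_approximatesLinearOn
    (hmeas n) (happrox n) fun t ht => (hγ t ht.1).mono inter_subset_left
  have himage : μH[1] (γ '' s) = ∑' n, μH[1] (γ '' (s ∩ u n)) := by
    conv_lhs => rw [hs_eq]
    exact hausdorffMeasure_image_iUnion hmeas hdisj' (hs_eq ▸ hcont) (hs_eq ▸ hinj)
  have hint : ∫⁻ t in s, ‖γ' t‖ₑ = ∑' n, ∫⁻ t in s ∩ u n, ‖γ' t‖ₑ := by
    conv_lhs => rw [hs_eq]
    exact lintegral_iUnion hmeas hdisj' _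
  have hvol : 2 * δ * volume s = ∑' n, 2 * δ * volume (s ∩ u n) := by
    rw [ENNReal.tsum_mul_left, ← measure_iUnion hdisj' hmeas, ← hs_eq]
  rw [himage, hint, hvol, ← ENNReal.tsum_add, ← ENNReal.tsum_add]
  exact ⟨ENNReal.tsum_le_tsum fun n => (hpiece n).1, ENNReal.tsum_le_tsum fun n => (hpiece n).2⟩

lemma hausdorffMeasure_image_eq_lintegral_enorm_deriv_of_volume_ne_top (hs : MeasurableSet s)
    (hγ : ∀ t ∈ s, HasDerivWithinAt γ (γ' t) s t) (hinj : InjOn γ s) (hfin : volume s ≠ ∞) :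
    μH[1] (γ '' s) = ∫⁻ t in s, ‖γ' t‖ₑ := by
  have hlim (c : ℝ≥0∞) :
      Tendsto (fun δ : ℝ≥0 => c + 2 * δ * volume s) (𝓝[≠] 0) (𝓝 c) := by
    have : Continuous fun δ : ℝ≥0 => c + 2 * δ * volume s := by fun_prop (disch := norm_num)
    simpa using (this.tendsto 0).mono_left nhdsWithin_le_nhds
  have hclose : ∀ᶠ δ : ℝ≥0 in 𝓝[≠] 0, _ :=
    eventually_mem_nhdsWithin.mono fun _ hδ =>
      hausdorffMeasure_image_and_lintegral_close hs hγ hinj hδ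
  exact le_antisymm (ge_of_tendsto (hlim _) (hclose.mono fun _ h => h.1))
    (ge_of_tendsto (hlim _) (hclose.mono fun _ h => h.2))

theorem hausdorffMeasure_image_eq_lintegral_enorm_deriv (hs : MeasurableSet s)
    (hγ : ∀ t ∈ s, HasDerivWithinAt γ (γ' t) s t) (hinj : InjOn γ s) :
    μH[1] (γ '' s) = ∫⁻ t in s, ‖γ' t‖ₑ := by
  let u (n : ℤ) : Set ℝ := s ∩ Ioc (n : ℝ) (n + 1)
  have hs_eq : s = ⋃ n, u n := by rw [← inter_iUnion, iUnion_Ioc_intCast, inter_univ]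
  have hmeas (n : ℤ) : MeasurableSet (u n) := hs.inter measurableSet_Ioc
  have hdisj : Pairwise (Function.onFun Disjoint u) := fun i j hij =>
    (pairwise_disjoint_Ioc_intCast ℝ hij).mono inter_subset_right inter_subset_right
  have hcont : ContinuousOn γ s := fun t ht => (hγ t ht).continuousWithinAt
  rw [hs_eq, lintegral_iUnion hmeas hdisj,
    hausdorffMeasure_image_iUnion hmeas hdisj (hs_eq ▸ hcont) (hs_eq ▸ hinj)]
  refine tsum_congr fun n => ?_
  exact hausdorffMeasure_image_eq_lintegral_enorm_deriv_of_volume_ne_top (hmeas n)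
    (fun t ht => (hγ t ht.1).mono inter_subset_left) (hinj.mono inter_subset_left)
    (measure_ne_top_of_subset inter_subset_right measure_Ioc_lt_top.ne)

theorem setIntegral_image_hausdorffMeasure {F : Type*} [NormedAddCommGroup F] [NormedSpace ℝ F]
    (hs : MeasurableSet s) (hγ : ∀ t ∈ s, HasDerivWithinAt γ (γ' t) s t) (hinj : InjOn γ s)
    (hγ'm : AEMeasurable (fun t => ‖γ' t‖₊) (volume.restrict s)) (f : E → F) :
    ∫ x in γ '' s, f x ∂μH[1] = ∫ t in s, ‖γ' t‖ • f (γ t) := by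
  have hcont : ContinuousOn γ s := fun t ht => (hγ t ht).continuousWithinAt
  have hemb := hcont.measurableEmbedding hs hinj
  have hmap : ((volume.withDensity fun t => (‖γ' t‖₊ : ℝ≥0∞)).comap ((↑) : s → ℝ)).map
      (s.domRestrict γ) = (μH[1] : Measure E).restrict (γ '' s) := by
    ext B hB
    have hpre := hemb.measurable hB
    have hsub := (MeasurableEmbedding.subtype_coe hs).measurableSet_image.2 hpre
    rw [hemb.map_apply, (MeasurableEmbedding.subtype_coe hs).comap_apply,
      withDensity_apply _ hsub, Measure.restrict_apply hB]
    have himage : B ∩ γ '' s = γ '' ((↑) '' (s.domRestrict γ ⁻¹' B)) := by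
      rw [inter_comm, ← image_inter_preimage, ← Subtype.image_preimage_coe]; rfl
    have hsubset : (↑) '' (s.domRestrict γ ⁻¹' B) ⊆ s := Subtype.coe_image_subset _ _
    rw [himage, hausdorffMeasure_image_eq_lintegral_enorm_deriv hsub
      (fun t ht => (hγ t (hsubset ht)).mono hsubset) (hinj.mono hsubset)]
    rfl
  rw [← hmap, hemb.integral_map]
  simp only [domRestrict_apply]
  rw [← (MeasurableEmbedding.subtype_coe hs).integral_map (g := fun t => f (γ t)),
    map_comap_subtype_coe hs, setIntegral_withDensity_eq_setIntegral_smul₀ hγ'm _ hs]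
  rfl

end ArcLength

section EllipseCurve

@[simp]
lemma pt_apply_zero (u v : ℝ) : pt u v 0 = u := rfl

@[simp]
lemma pt_apply_one (u v : ℝ) : pt u v 1 = v := rfl

lemma pt_eta (x : Pt) : pt (x 0) (x 1) = x := by
  ext i; fin_cases i <;> rfl

lemma norm_pt (u v : ℝ) : ‖pt u v‖ = √(u ^ 2 + v ^ 2) := by
  simp [EuclideanSpace.norm_eq]

lemma hasDerivAt_pt {f g : ℝ → ℝ} {f' g' t : ℝ} (hf : HasDerivAt f f' t)
    (hg : HasDerivAt g g' t) : HasDerivAt (fun t => pt (f t) (g t)) (pt f' g') t := by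
  have hvec : HasDerivAt (fun t => ![f t, g t]) ![f', g'] t := by
    rw [hasDerivAt_pi, Fin.forall_fin_two]
    exact ⟨hf, hg⟩
  exact (PiLp.continuousLinearEquiv 2 ℝ fun _ : Fin 2 => ℝ).symm.hasFDerivAt.comp_hasDerivAt t hvec

/-- The open elliptic domain with semi-axes `1` and `b`, so that `Eell ξ` is the case
`b = tanh ξ`. -/
def openEllipse (b : ℝ) : Set Pt := {x | x 0 ^ 2 + (x 1 / b) ^ 2 < 1}

/-- The boundary ellipse with semi-axes `1` and `b`, parametrised by the eccentric anomaly. -/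
def ellipseCurve (b t : ℝ) : Pt := pt (cos t) (b * sin t)

/-- The speed of `ellipseCurve`. -/
def ellipseSpeed (b t : ℝ) : ℝ := √(sin t ^ 2 + b ^ 2 * cos t ^ 2)

variable {b : ℝ}

lemma sin_sq_add_sq_mul_cos_sq_pos (hb : b ≠ 0) (t : ℝ) : 0 < sin t ^ 2 + b ^ 2 * cos t ^ 2 := by
  rcases eq_or_ne (sin t) 0 with h | h
  · have : cos t ≠ 0 := fun hc => by simpa [h, hc] using sin_sq_add_cos_sq t
    positivity
  · positivity

lemma ellipseSpeed_pos (hb : b ≠ 0) (t : ℝ) : 0 < ellipseSpeed b t :=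
  sqrt_pos.2 (sin_sq_add_sq_mul_cos_sq_pos hb t)

lemma continuous_ellipseSpeed (b : ℝ) : Continuous (ellipseSpeed b) := by
  unfold ellipseSpeed; fun_prop

lemma hasDerivAt_ellipseCurve (b t : ℝ) :
    HasDerivAt (ellipseCurve b) (pt (-sin t) (b * cos t)) t :=
  hasDerivAt_pt (hasDerivAt_cos t) ((hasDerivAt_sin t).const_mul b)

lemma continuous_ellipseCurve (b : ℝ) : Continuous (ellipseCurve b) :=
  continuous_iff_continuousAt.2 fun t => (hasDerivAt_ellipseCurve b t).continuousAt

lemma norm_deriv_ellipseCurve (b t : ℝ) : ‖pt (-sin t) (b * cos t)‖ = ellipseSpeed b t := by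
  rw [norm_pt, ellipseSpeed, neg_sq, mul_pow]

lemma norm_ellipseCurve_sub (b s t : ℝ) :
    ‖ellipseCurve b s - ellipseCurve b t‖ =
      2 * |sin ((s - t) / 2)| * ellipseSpeed b ((s + t) / 2) := by
  have hsub : ellipseCurve b s - ellipseCurve b t =
      pt (cos s - cos t) (b * (sin s - sin t)) := by
    ext i; fin_cases i <;> simp [ellipseCurve, mul_sub]
  have habs : 2 * |sin ((s - t) / 2)| = √((2 * sin ((s - t) / 2)) ^ 2) := by
    rw [sqrt_sq_eq_abs, abs_mul, abs_two]
  rw [hsub, norm_pt, cos_sub_cos, sin_sub_sin, habs, ellipseSpeed, ← sqrt_mul (sq_nonneg _)]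
  congr 1; ring

lemma isOpen_openEllipse (b : ℝ) : IsOpen (openEllipse b) :=
  isOpen_lt (by fun_prop) continuous_const

lemma mem_frontier_openEllipse {x : Pt} :
    x ∈ frontier (openEllipse b) ↔ x 0 ^ 2 + (x 1 / b) ^ 2 = 1 := by
  have hcont : Continuous fun x : Pt => x 0 ^ 2 + (x 1 / b) ^ 2 := by fun_prop
  refine ⟨fun hx => frontier_lt_subset_eq hcont continuous_const hx, fun hx => ?_⟩
  rw [(isOpen_openEllipse b).frontier_eq]
  refine ⟨?_, fun hlt => (ne_of_lt hlt) hx⟩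
  have hlim : Tendsto (fun r : ℝ => r • x) (𝓝[<] 1) (𝓝 x) := by
    have : Continuous fun r : ℝ => r • x := by fun_prop
    simpa using (this.tendsto 1).mono_left nhdsWithin_le_nhds
  refine mem_closure_of_tendsto hlim ?_
  filter_upwards [Ioo_mem_nhdsLT zero_lt_one] with r hr
  calc (r • x) 0 ^ 2 + ((r • x) 1 / b) ^ 2 = r ^ 2 * (x 0 ^ 2 + (x 1 / b) ^ 2) := by
        simp only [PiLp.smul_apply, smul_eq_mul]; ring
    _ < 1 := by rw [hx, mul_one]; exact pow_lt_one₀ hr.1.le hr.2 two_ne_zero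

lemma ellipseCurve_mem_frontier (hb : b ≠ 0) (t : ℝ) :
    ellipseCurve b t ∈ frontier (openEllipse b) := by
  rw [mem_frontier_openEllipse, ellipseCurve, pt_apply_zero, pt_apply_one,
    mul_div_cancel_left₀ _ hb, cos_sq_add_sin_sq]

lemma frontier_openEllipse (hb : b ≠ 0) :
    frontier (openEllipse b) = ellipseCurve b '' Ioc (-π) π := by
  refine Subset.antisymm (fun x hx => ?_)
    (image_subset_iff.2 fun t _ => ellipseCurve_mem_frontier hb t)
  rw [mem_frontier_openEllipse] at hx
  set z : ℂ := x 0 + (x 1 / b : ℝ) * Complex.I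
  have hz : ‖z‖ = 1 := by rw [Complex.norm_add_mul_I, hx, sqrt_one]
  have hcos : cos z.arg = x 0 := by
    rw [Complex.cos_arg (norm_ne_zero_iff.1 (by simp [hz])), hz]; simp [z]
  have hsin : sin z.arg = x 1 / b := by rw [Complex.sin_arg, hz]; simp [z]
  refine ⟨z.arg, Complex.arg_mem_Ioc z, ?_⟩
  rw [ellipseCurve, hcos, hsin, mul_div_cancel₀ _ hb, pt_eta]

lemma injOn_ellipseCurve (hb : b ≠ 0) : InjOn (ellipseCurve b) (Ioc (-π) π) := by
  intro s hs t ht hst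
  have hcos : cos s = cos t := congrArg (· 0) hst
  have hsin : sin s = sin t := mul_left_cancel₀ hb (congrArg (· 1) hst)
  have harg (u : ℝ) (hu : u ∈ Ioc (-π) π) : Complex.arg (cos u + sin u * Complex.I) = u := by
    simpa only [Complex.ofReal_cos, Complex.ofReal_sin] using Complex.arg_cos_add_sin_mul_I hu
  rw [← harg s hs, ← harg t ht, hcos, hsin]

theorem setIntegral_frontier_openEllipse (hb : b ≠ 0) (f : Pt → ℝ) :
    ∫ y in frontier (openEllipse b), f y ∂μH[1] =
      ∫ t in -π..π, ellipseSpeed b t * f (ellipseCurve b t) := by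
  rw [frontier_openEllipse hb, intervalIntegral.integral_of_le (by linarith [pi_pos]),
    setIntegral_image_hausdorffMeasure measurableSet_Ioc
      (fun t _ => (hasDerivAt_ellipseCurve b t).hasDerivWithinAt) (injOn_ellipseCurve hb)]
  · simp only [norm_deriv_ellipseCurve, smul_eq_mul]
  · simp only [← norm_toNNReal, norm_deriv_ellipseCurve]
    exact (continuous_ellipseSpeed b).measurable.real_toNNReal.aemeasurable

end EllipseCurve

section LogKernel

variable {V : Type*} [NormedAddCommGroup V] {ε : ℝ}

/-- The regularisation `½ log (‖z‖² + ε²)` of the logarithmic kernel; `ε = 0` gives `log ‖z‖`. -/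
def regLog (ε : ℝ) (z : V) : ℝ := 1 / 2 * log (‖z‖ ^ 2 + ε ^ 2)

lemma regLog_zero (z : V) : regLog 0 z = log ‖z‖ := by
  rw [regLog, zero_pow two_ne_zero, add_zero, log_pow]; push_cast; ring

lemma continuous_regLog (hε : ε ≠ 0) : Continuous (regLog ε : V → ℝ) :=
  continuous_const.mul (Continuous.log (by fun_prop) fun z => by positivity)

lemma abs_regLog_le (hε : ε ∈ Icc (0 : ℝ) 1) {z : V} (hz : z ≠ 0) :
    |regLog ε z| ≤ |log ‖z‖| + |regLog 1 z| := by
  have hlower : log ‖z‖ ≤ regLog ε z := by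
    rw [← regLog_zero]; unfold regLog; gcongr; exact hε.1
  have hupper : regLog ε z ≤ regLog 1 z := by
    unfold regLog; gcongr
    exacts [hε.1, hε.2]
  exact (abs_le_max_abs_abs hlower hupper).trans
    (max_le_add_of_nonneg (abs_nonneg _) (abs_nonneg _))

lemma tendsto_regLog {z : V} (hz : z ≠ 0) :
    Tendsto (fun ε => regLog ε z) (𝓝[>] 0) (𝓝 (log ‖z‖)) := by
  have : ContinuousAt (fun ε : ℝ => regLog ε z) 0 :=
    continuousAt_const.mul (ContinuousAt.log (by fun_prop) (by simpa using hz))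
  rw [← regLog_zero]
  exact this.tendsto.mono_left nhdsWithin_le_nhds

variable [NormedSpace ℝ V]

/-- The gradient of `regLog ε`; `ε = 0` gives the gradient `z / ‖z‖²` of the logarithmic kernel. -/
def regLogGradient (ε : ℝ) (z : V) : V := (‖z‖ ^ 2 + ε ^ 2)⁻¹ • z

lemma continuous_regLogGradient (hε : ε ≠ 0) : Continuous (regLogGradient ε : V → V) :=
  (Continuous.inv₀ (by fun_prop) fun z => by positivity).smul continuous_id

lemma norm_regLogGradient (ε : ℝ) (z : V) :
    ‖regLogGradient ε z‖ = (‖z‖ ^ 2 + ε ^ 2)⁻¹ * ‖z‖ := by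
  rw [regLogGradient, norm_smul, norm_of_nonneg (by positivity)]

lemma norm_regLogGradient_le (hε : 0 < ε) (z : V) : ‖regLogGradient ε z‖ ≤ ε⁻¹ := by
  rw [norm_regLogGradient, inv_mul_le_iff₀ (by positivity), ← div_eq_mul_inv, le_div_iff₀ hε]
  nlinarith [sq_nonneg (‖z‖ - ε), sq_nonneg (‖z‖ + ε)]

lemma regLogGradient_smul {c : ℝ} (hc : c ≠ 0) (ε : ℝ) (z : V) :
    regLogGradient (c * ε) (c • z) = c⁻¹ • regLogGradient ε z := by
  have : ‖c • z‖ ^ 2 + (c * ε) ^ 2 = c ^ 2 * (‖z‖ ^ 2 + ε ^ 2) := by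
    rw [norm_smul, mul_pow, norm_eq_abs, sq_abs]; ring
  rw [regLogGradient, regLogGradient, this, smul_smul, smul_smul, mul_inv]
  congr 1; field_simp

lemma norm_regLogGradient_one_sub (z : V) :
    ‖regLogGradient 1 z - regLogGradient 0 z‖ = (‖z‖ * (1 + ‖z‖ ^ 2))⁻¹ := by
  rcases eq_or_ne z 0 with rfl | hz
  · simp [regLogGradient]
  have : 0 < ‖z‖ := norm_pos_iff.2 hz
  have hcoeff : (‖z‖ ^ 2 + 1 ^ 2)⁻¹ - (‖z‖ ^ 2 + 0 ^ 2)⁻¹ = -(‖z‖ ^ 2 * (1 + ‖z‖ ^ 2))⁻¹ := by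
    field_simp; ring
  rw [regLogGradient, regLogGradient, ← sub_smul, hcoeff, norm_smul, norm_neg,
    norm_of_nonneg (by positivity)]
  field_simp

lemma norm_regLogGradient_sub_eq (hε : ε ≠ 0) (z : V) :
    ‖regLogGradient ε z - regLogGradient 0 z‖ =
      |ε|⁻¹ * ‖regLogGradient 1 (ε⁻¹ • z) - regLogGradient 0 (ε⁻¹ • z)‖ := by
  have h₁ := regLogGradient_smul hε 1 (ε⁻¹ • z)
  have h₀ := regLogGradient_smul hε 0 (ε⁻¹ • z)
  rw [mul_one, smul_inv_smul₀ hε] at h₁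
  rw [mul_zero, smul_inv_smul₀ hε] at h₀
  rw [h₁, h₀, ← smul_sub, norm_smul, norm_inv, norm_eq_abs]

variable [MeasurableSpace V] [BorelSpace V]

lemma measurable_regLogGradient (ε : ℝ) : Measurable (regLogGradient ε : V → V) := by
  unfold regLogGradient; fun_prop

variable [FiniteDimensional ℝ V] {μ : Measure V} {E : Set V}

lemma integrableOn_of_continuous_of_isBounded {F : Type*} [NormedAddCommGroup F]
    [IsFiniteMeasureOnCompacts μ] {f : V → F} (hf : Continuous f) (hE : Bornology.IsBounded E) :
    IntegrableOn f E μ :=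
  (hf.continuousOn.integrableOn_compact hE.isCompact_closure).mono_set subset_closure

variable [μ.IsAddHaarMeasure]

lemma integrable_regLogGradient_one_sub (hV : Module.finrank ℝ V = 2) :
    Integrable (fun z : V => ‖regLogGradient 1 z - regLogGradient 0 z‖) μ := by
  have : Nontrivial V := Module.nontrivial_of_finrank_pos (by rw [hV]; exact two_pos)
  simp only [norm_regLogGradient_one_sub]
  rw [integrable_fun_norm_addHaar μ (f := fun r => (r * (1 + r ^ 2))⁻¹), hV]
  refine integrable_inv_one_add_sq.integrableOn.congr_fun (fun r hr => ?_) measurableSet_Ioi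
  have : r ≠ 0 := (mem_Ioi.1 hr).ne'
  simp only [Nat.add_one_sub_one, pow_one, mul_inv_rev, smul_eq_mul]
  field_simp

lemma integrable_regLogGradient_sub (hV : Module.finrank ℝ V = 2) (hε : ε ≠ 0) :
    Integrable (fun z : V => ‖regLogGradient ε z - regLogGradient 0 z‖) μ := by
  simp only [norm_regLogGradient_sub_eq hε]
  exact ((integrable_comp_smul_iff μ _ (inv_ne_zero hε)).2
    (integrable_regLogGradient_one_sub hV)).const_mul _

lemma integral_norm_regLogGradient_sub (hV : Module.finrank ℝ V = 2) (hε : 0 < ε) :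
    ∫ z : V, ‖regLogGradient ε z - regLogGradient 0 z‖ ∂μ =
      ε * ∫ z : V, ‖regLogGradient 1 z - regLogGradient 0 z‖ ∂μ := by
  simp only [norm_regLogGradient_sub_eq hε.ne']
  rw [integral_const_mul, Measure.integral_comp_smul μ
    (fun z => ‖regLogGradient 1 z - regLogGradient 0 z‖), hV, smul_eq_mul, ← mul_assoc,
    abs_of_pos hε, abs_of_pos (by positivity)]
  congr 1; field_simp

lemma integrableOn_regLogGradient_zero_comp_sub (hV : Module.finrank ℝ V = 2)
    (hE : Bornology.IsBounded E) (x : V) :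
    IntegrableOn (fun y => regLogGradient 0 (x - y)) E μ := by
  have hreg : IntegrableOn (fun y => regLogGradient 1 (x - y)) E μ :=
    integrableOn_of_continuous_of_isBounded
      ((continuous_regLogGradient one_ne_zero).comp (continuous_const.sub continuous_id)) hE
  have hdiff : Integrable (fun z : V => regLogGradient 1 z - regLogGradient 0 z) μ :=
    (integrable_norm_iff ((measurable_regLogGradient 1).sub
      (measurable_regLogGradient 0)).aestronglyMeasurable).1 (integrable_regLogGradient_one_sub hV)
  exact (hreg.sub (hdiff.comp_sub_left x).integrableOn).congr
    (.of_forall fun y => sub_sub_cancel _ _)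

lemma integrableOn_log_norm_sub (hV : Module.finrank ℝ V = 2) (hE : Bornology.IsBounded E)
    (x : V) : IntegrableOn (fun y => log ‖x - y‖) E μ := by
  have hnorm : IntegrableOn (fun y => ‖x - y‖) E μ :=
    integrableOn_of_continuous_of_isBounded (by fun_prop) hE
  refine (hnorm.add (integrableOn_regLogGradient_zero_comp_sub hV hE x).norm).mono'
    (Measurable.aestronglyMeasurable (by fun_prop)) (.of_forall fun y => ?_)
  rw [Pi.add_apply, norm_regLogGradient, zero_pow two_ne_zero, add_zero, pow_two, mul_inv,
    norm_eq_abs]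
  rcases (norm_nonneg (x - y)).eq_or_lt with h | h
  · simp [← h]
  · have hupper := log_le_self h.le
    have hlower := log_le_self (inv_pos.2 h).le
    rw [log_inv] at hlower
    rw [inv_mul_cancel_right₀ h.ne', abs_le]
    constructor <;> linarith [inv_pos.2 h]

lemma tendsto_integral_regLog (hV : Module.finrank ℝ V = 2) (hE : Bornology.IsBounded E)
    (x : V) :
    Tendsto (fun ε => ∫ y in E, regLog ε (x - y) ∂μ) (𝓝[>] 0)
      (𝓝 (∫ y in E, log ‖x - y‖ ∂μ)) := by
  have : Nontrivial V := Module.nontrivial_of_finrank_pos (by rw [hV]; exact two_pos)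
  have hne : ∀ᵐ y ∂μ.restrict E, x - y ≠ 0 :=
    ae_restrict_of_ae ((Measure.ae_ne μ x).mono fun y hy => sub_ne_zero.2 hy.symm)
  have hreg {ε : ℝ} (hε : ε ≠ 0) : Continuous fun y => regLog ε (x - y) :=
    (continuous_regLog hε).comp (continuous_const.sub continuous_id)
  refine tendsto_integral_filter_of_dominated_convergence
    (fun y => |log ‖x - y‖| + |regLog 1 (x - y)|) ?_ ?_ ?_ (hne.mono fun y => tendsto_regLog)
  · filter_upwards [self_mem_nhdsWithin] with ε hε
    exact (hreg (ne_of_gt hε)).aestronglyMeasurable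
  · filter_upwards [Ioo_mem_nhdsGT zero_lt_one] with ε hε
    exact hne.mono fun y => abs_regLog_le ⟨hε.1.le, hε.2.le⟩
  · exact (integrableOn_log_norm_sub hV hE x).abs.add
      (integrableOn_of_continuous_of_isBounded (hreg one_ne_zero) hE).abs

lemma norm_integral_regLogGradient_sub_le (hV : Module.finrank ℝ V = 2)
    (hE : Bornology.IsBounded E) (hε : 0 < ε) (x : V) :
    ‖(∫ y in E, regLogGradient ε (x - y) ∂μ) - ∫ y in E, regLogGradient 0 (x - y) ∂μ‖ ≤
      ε * ∫ z : V, ‖regLogGradient 1 z - regLogGradient 0 z‖ ∂μ := by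
  have hgrad : Continuous fun y => regLogGradient ε (x - y) :=
    (continuous_regLogGradient hε.ne').comp (continuous_const.sub continuous_id)
  rw [← integral_sub (integrableOn_of_continuous_of_isBounded hgrad hE)
    (integrableOn_regLogGradient_zero_comp_sub hV hE x)]
  calc ‖∫ y in E, regLogGradient ε (x - y) - regLogGradient 0 (x - y) ∂μ‖
      ≤ ∫ y in E, ‖regLogGradient ε (x - y) - regLogGradient 0 (x - y)‖ ∂μ :=
        norm_integral_le_integral_norm _
    _ ≤ ∫ y, ‖regLogGradient ε (x - y) - regLogGradient 0 (x - y)‖ ∂μ :=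
        setIntegral_le_integral ((integrable_regLogGradient_sub hV hε.ne').comp_sub_left x)
          (.of_forall fun y => norm_nonneg _)
    _ = ε * ∫ z : V, ‖regLogGradient 1 z - regLogGradient 0 z‖ ∂μ := by
        rw [integral_sub_left_eq_self (fun z => ‖regLogGradient ε z - regLogGradient 0 z‖) μ x,
          integral_norm_regLogGradient_sub hV hε]

end LogKernel

section LogPotential

variable {V : Type*} [NormedAddCommGroup V] [InnerProductSpace ℝ V] {ε : ℝ}

lemma hasFDerivAt_regLog (hε : ε ≠ 0) (z : V) :
    HasFDerivAt (regLog ε) (innerSL ℝ (regLogGradient ε z)) z := by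
  refine ((((hasFDerivAt_id z).norm_sq.add_const (ε ^ 2)).log (by positivity)).const_mul
    (1 / 2)).congr_fderiv ?_
  ext v
  simp only [regLogGradient, id_eq, ContinuousLinearMap.comp_id, smul_apply,
    coe_innerSL_apply, nsmul_eq_mul, Nat.cast_ofNat, smul_eq_mul, map_smul]
  ring

variable [FiniteDimensional ℝ V] [MeasurableSpace V] [BorelSpace V] {μ : Measure V}
  [μ.IsAddHaarMeasure] {E : Set V}

lemma hasFDerivAt_integral_regLog (hE : Bornology.IsBounded E) (hε : 0 < ε) (x : V) :
    HasFDerivAt (fun x => ∫ y in E, regLog ε (x - y) ∂μ)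
      (innerSL ℝ (∫ y in E, regLogGradient ε (x - y) ∂μ)) x := by
  have hlog (x : V) : Continuous fun y => regLog ε (x - y) :=
    (continuous_regLog hε.ne').comp (continuous_const.sub continuous_id)
  have hgrad : Continuous fun y => regLogGradient ε (x - y) :=
    (continuous_regLogGradient hε.ne').comp (continuous_const.sub continuous_id)
  rw [← (innerSL ℝ).integral_comp_comm (integrableOn_of_continuous_of_isBounded hgrad hE)]
  refine hasFDerivAt_integral_of_dominated_of_fderiv_le (bound := fun _ => ε⁻¹)
    (F' := fun x y => innerSL ℝ (regLogGradient ε (x - y))) univ_mem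
    (.of_forall fun x => (hlog x).aestronglyMeasurable)
    (integrableOn_of_continuous_of_isBounded (hlog x) hE)
    ((innerSL ℝ).continuous.comp hgrad).aestronglyMeasurable ?_
    (integrableOn_of_continuous_of_isBounded continuous_const hE) ?_
  · refine Eventually.of_forall fun y x _ => ?_
    rw [innerSL_apply_norm]
    exact norm_regLogGradient_le hε _
  · refine Eventually.of_forall fun y x _ => ?_
    exact (hasFDerivAt_regLog hε.ne' (x - y)).comp x ((hasFDerivAt_id x).sub_const y)

theorem hasGradientAt_integral_log_norm_sub (hV : Module.finrank ℝ V = 2)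
    (hE : Bornology.IsBounded E) (x : V) :
    HasGradientAt (fun x => ∫ y in E, log ‖x - y‖ ∂μ) (∫ y in E, regLogGradient 0 (x - y) ∂μ)
      x := by
  rw [hasGradientAt_iff_hasFDerivAt]
  refine hasFDerivAt_of_tendstoUniformlyOnFilter (l := 𝓝[>] (0 : ℝ))
    (f := fun ε x => ∫ y in E, regLog ε (x - y) ∂μ)
    (f' := fun ε x => innerSL ℝ (∫ y in E, regLogGradient ε (x - y) ∂μ))
    (g' := fun x => innerSL ℝ (∫ y in E, regLogGradient 0 (x - y) ∂μ)) ?_ ?_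
    (.of_forall fun x => tendsto_integral_regLog hV hE x)
  · rw [Metric.tendstoUniformlyOnFilter_iff]
    intro η hη
    have hlim : Tendsto (fun ε : ℝ => ε * ∫ z : V, ‖regLogGradient 1 z - regLogGradient 0 z‖ ∂μ)
        (𝓝[>] 0) (𝓝 0) := by
      simpa using ((continuous_mul_const _).tendsto (0 : ℝ)).mono_left nhdsWithin_le_nhds
    refine ((hlim.eventually_lt_const hη).and self_mem_nhdsWithin).prod_inl _ |>.mono ?_
    rintro ⟨ε, x⟩ ⟨hε, hε₀⟩
    rw [dist_comm, dist_eq_norm, ← map_sub, innerSL_apply_norm]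
    exact (norm_integral_regLogGradient_sub_le hV hE hε₀ x).trans_lt hε
  · refine (Eventually.prod_inl self_mem_nhdsWithin _).mono fun p hp => ?_
    exact hasFDerivAt_integral_regLog hE hp p.2

end LogPotential

section PolarIntegral

variable {F : Type*} [NormedAddCommGroup F] [NormedSpace ℝ F]

lemma integral_eq_setIntegral_polar (f : Pt → F) :
    ∫ z, f z = ∫ p in Ioi (0 : ℝ) ×ˢ Ioo (-π) π, p.1 • f (p.1 • pt (cos p.2) (sin p.2)) := by
  have hlp := (PiLp.volume_preserving_toLp (Fin 2)).integral_comp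
    (MeasurableEquiv.toLp 2 (Fin 2 → ℝ)).measurableEmbedding f
  have hprod := (volume_preserving_finTwoArrow ℝ).symm.integral_comp
    (MeasurableEquiv.finTwoArrow (α := ℝ)).symm.measurableEmbedding
    (fun v => f (WithLp.toLp 2 v))
  rw [← hlp, ← hprod, ← integral_comp_polarCoord_symm]
  refine setIntegral_congr_fun polarCoord.open_target.measurableSet fun p _ => ?_
  congr 2; ext i; fin_cases i <;> rfl

lemma integral_polar_sector [CompleteSpace F] {ρ : ℝ → ℝ} (hρ : Continuous ρ) {g : ℝ → F}
    (hg : Continuous g) :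
    ∫ p in Ioi (0 : ℝ) ×ˢ Ioo (-π) π, {p : ℝ × ℝ | p.1 < ρ p.2}.indicator (fun p => g p.2) p =
      ∫ a in -π..π, (ρ a)⁺ • g a := by
  set S : Set (ℝ × ℝ) := {p | p.1 < ρ p.2}
  have hS : MeasurableSet S := (isOpen_lt continuous_fst (hρ.comp continuous_snd)).measurableSet
  obtain ⟨M, hM⟩ := (isCompact_Icc (a := -π) (b := π)).exists_bound_of_continuousOn hρ.continuousOn
  have hint : IntegrableOn (S.indicator fun p => g p.2) (Ioi (0 : ℝ) ×ˢ Ioo (-π) π) := by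
    rw [IntegrableOn, integrable_indicator_iff hS, IntegrableOn, Measure.restrict_restrict hS]
    refine IntegrableOn.mono_set (t := Icc 0 M ×ˢ Icc (-π) π)
      ((hg.comp continuous_snd).continuousOn.integrableOn_compact
        (isCompact_Icc.prod isCompact_Icc)) ?_
    rintro ⟨r, a⟩ ⟨hra : r < ρ a, hr : 0 < r, ha⟩
    have ha := Ioo_subset_Icc_self ha
    exact ⟨⟨hr.le, hra.le.trans ((le_abs_self _).trans (hM a ha))⟩, ha⟩
  have hradial (a : ℝ) :
      ∫ r in Ioi (0 : ℝ), S.indicator (fun p => g p.2) (r, a) = (ρ a)⁺ • g a := by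
    change ∫ r in Ioi (0 : ℝ), (Iio (ρ a)).indicator (fun _ => g a) r = _
    rw [setIntegral_indicator measurableSet_Iio, Ioi_inter_Iio, setIntegral_const,
      Real.volume_real_Ioo, sub_zero]
    rfl
  rw [IntegrableOn, Measure.volume_eq_prod, ← Measure.prod_restrict] at hint
  rw [Measure.volume_eq_prod, ← Measure.prod_restrict, integral_prod_symm _ hint,
    intervalIntegral.integral_of_le (by linarith [pi_pos]), integral_Ioc_eq_integral_Ioo]
  simp only [hradial]

lemma norm_pt_cos_sin (a : ℝ) : ‖pt (cos a) (sin a)‖ = 1 := by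
  rw [norm_pt, cos_sq_add_sin_sq, sqrt_one]

lemma continuous_pt {f g : ℝ → ℝ} (hf : Continuous f) (hg : Continuous g) :
    Continuous fun t => pt (f t) (g t) :=
  (PiLp.continuous_toLp 2 _).comp (by fun_prop)

-- In polar coordinates about `x` the Jacobian `r` cancels the singularity `1 / r` of the kernel.
lemma setIntegral_regLogGradient_of_radial {U : Set Pt} (hU : MeasurableSet U) {x : Pt}
    {ρ : ℝ → ℝ} (hρ : Continuous ρ)
    (hmem : ∀ a r, 0 < r → (x + r • pt (cos a) (sin a) ∈ U ↔ r < ρ a)) :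
    ∫ y in U, regLogGradient 0 (x - y) = -∫ a in -π..π, (ρ a)⁺ • pt (cos a) (sin a) := by
  have hpolar := integral_polar_sector hρ
    (continuous_pt continuous_cos continuous_sin).neg
  simp only [Pi.neg_apply, smul_neg, intervalIntegral.integral_neg] at hpolar
  rw [← integral_indicator hU, ← integral_add_left_eq_self _ x, integral_eq_setIntegral_polar,
    ← hpolar]
  refine setIntegral_congr_fun (measurableSet_Ioi.prod measurableSet_Ioo) ?_
  rintro ⟨r, a⟩ ⟨hr : 0 < r, -⟩
  by_cases h : r < ρ a
  · have hnorm : ‖-(r • pt (cos a) (sin a))‖ = r := by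
      rw [norm_neg, norm_smul, norm_pt_cos_sin, mul_one, norm_of_nonneg hr.le]
    have hcoeff : r * (r ^ 2 + 0 ^ 2)⁻¹ * r = 1 := by
      rw [zero_pow two_ne_zero, add_zero]; field_simp
    simp only [indicator_of_mem ((hmem a r hr).2 h), sub_add_cancel_left, regLogGradient, hnorm]
    rw [indicator_of_mem (show (r, a) ∈ {p : ℝ × ℝ | p.1 < ρ p.2} from h), smul_neg, smul_neg,
      smul_smul, smul_smul, hcoeff, one_smul]
  · simp only [indicator_of_notMem (mt (hmem a r hr).1 h), smul_zero]
    rw [indicator_of_notMem (show (r, a) ∉ {p : ℝ × ℝ | p.1 < ρ p.2} from h)]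

lemma integral_eq_zero_of_antiperiodic_pi {f : ℝ → F} (hf : Function.Antiperiodic f π) :
    ∫ a in -π..π, f a = 0 := by
  have hper := hf.periodic_two_mul.intervalIntegral_add_eq (-π) 0
  have hshift := intervalIntegral.integral_comp_add_right (a := -π) (b := π) f π
  rw [show -π + 2 * π = π by ring] at hper
  rw [neg_add_cancel, ← two_mul, ← zero_add (2 * π), ← hper] at hshift
  simp only [hf _, intervalIntegral.integral_neg] at hshift
  have : IsAddTorsionFree F := .of_isTorsionFree ℝ F
  exact self_eq_neg.1 hshift.symm

lemma integral_eq_zero_of_odd {f : ℝ → F} (hf : f.Odd) (R : ℝ) : ∫ a in -R..R, f a = 0 := by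
  have h := intervalIntegral.integral_comp_neg (a := -R) (b := R) f
  simp only [hf _, intervalIntegral.integral_neg, neg_neg] at h
  have : IsAddTorsionFree F := .of_isTorsionFree ℝ F
  exact self_eq_neg.1 h.symm

lemma integral_posPart_smul_of_antiperiodic {ρ : ℝ → ℝ} (hρ : Continuous ρ)
    (hρπ : Function.Antiperiodic ρ π) {g : ℝ → F} (hg : Continuous g)
    (hgπ : Function.Antiperiodic g π) :
    ∫ a in -π..π, (ρ a)⁺ • g a = (1 / 2 : ℝ) • ∫ a in -π..π, ρ a • g a := by
  have hsplit (a : ℝ) : (ρ a)⁺ • g a = (1 / 2 : ℝ) • (ρ a • g a + |ρ a| • g a) := by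
    rw [← add_smul, add_abs_eq_two_nsmul_posPart, nsmul_eq_mul, smul_smul]
    congr 1; push_cast; ring
  have habs : ∫ a in -π..π, |ρ a| • g a = 0 :=
    integral_eq_zero_of_antiperiodic_pi fun a => by rw [hρπ, hgπ, abs_neg, smul_neg]
  simp only [hsplit]
  rw [intervalIntegral.integral_smul, intervalIntegral.integral_add, habs, add_zero]
  · exact (hρ.smul hg).intervalIntegrable _ _
  · exact (hρ.abs.smul hg).intervalIntegrable _ _

lemma intervalIntegral_pt {f g : ℝ → ℝ} {u v : ℝ} (huv : u ≤ v)
    (hf : IntervalIntegrable f volume u v) (hg : IntervalIntegrable g volume u v) :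
    ∫ t in u..v, pt (f t) (g t) = pt (∫ t in u..v, f t) (∫ t in u..v, g t) := by
  simp only [intervalIntegral.integral_of_le huv]
  have hcoord : ∀ i, Integrable (fun t => pt (f t) (g t) i) (volume.restrict (Ioc u v)) :=
    Fin.forall_fin_two.2 ⟨hf.1, hg.1⟩
  ext i
  rw [eval_integral_piLp hcoord]
  fin_cases i <;> rfl

end PolarIntegral

section EllipsePotential

variable {b : ℝ}

lemma integral_inv_sin_sq_add_sq_mul_cos_sq (hb : 0 < b) :
    ∫ a in -π..π, (sin a ^ 2 + b ^ 2 * cos a ^ 2)⁻¹ = 2 * π / b := by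
  -- A primitive without jumps: `arctan (tan a / b) = a + arctan (tan (arctan (tan a / b) - a))`.
  have hderiv (a : ℝ) : HasDerivAt
      (fun a => (a + arctan ((1 - b) * sin a * cos a / (sin a ^ 2 + b * cos a ^ 2))) / b)
      (sin a ^ 2 + b ^ 2 * cos a ^ 2)⁻¹ a := by
    have hden : 0 < sin a ^ 2 + b * cos a ^ 2 := by
      simpa only [sq_sqrt hb.le] using sin_sq_add_sq_mul_cos_sq_pos (sqrt_pos.2 hb).ne' a
    have hsum := sin_sq_add_sq_mul_cos_sq_pos hb.ne' a
    have hquot := (((hasDerivAt_sin a).const_mul (1 - b)).mul (hasDerivAt_cos a)).div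
      (((hasDerivAt_sin a).pow 2).add (((hasDerivAt_cos a).pow 2).const_mul b)) hden.ne'
    refine (((hasDerivAt_id a).add hquot.arctan).div_const b).congr_deriv ?_
    simp only [Pi.add_apply, Pi.mul_apply, Pi.pow_apply, Pi.div_apply]
    have htan : 1 + ((1 - b) * sin a * cos a / (sin a ^ 2 + b * cos a ^ 2)) ^ 2 =
        (sin a ^ 2 + b ^ 2 * cos a ^ 2) / (sin a ^ 2 + b * cos a ^ 2) ^ 2 := by
      rw [div_pow, eq_div_iff (by positivity), add_mul, div_mul_cancel₀ _ (by positivity)]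
      linear_combination (sin a ^ 2 + b ^ 2 * cos a ^ 2) * sin_sq_add_cos_sq a
    rw [htan]
    field_simp
    push_cast
    linear_combination (b * cos a ^ 2 - sin a ^ 2 + b * sin a ^ 2 + b - b ^ 2 * cos a ^ 2) *
      sin_sq_add_cos_sq a
  rw [intervalIntegral.integral_eq_sub_of_hasDerivAt fun a _ => hderiv a]
  · simp only [sin_neg, cos_neg, sin_pi, mul_zero, zero_mul, zero_div, arctan_zero, neg_zero,
      add_zero]
    ring
  · exact (Continuous.inv₀ (by fun_prop) fun a =>
      (sin_sq_add_sq_mul_cos_sq_pos hb.ne' a).ne').intervalIntegrable _ _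

lemma continuous_div_sin_sq_add_sq_mul_cos_sq (hb : b ≠ 0) {f : ℝ → ℝ} (hf : Continuous f) :
    Continuous fun a => f a / (sin a ^ 2 + b ^ 2 * cos a ^ 2) :=
  hf.div (by fun_prop) fun a => (sin_sq_add_sq_mul_cos_sq_pos hb a).ne'

lemma integral_cos_sq_div (hb : 0 < b) (hb₁ : b ≠ 1) :
    ∫ a in -π..π, cos a ^ 2 / (sin a ^ 2 + b ^ 2 * cos a ^ 2) = 2 * π / (b * (1 + b)) := by
  have hlin : ∫ a in -π..π, ((1 - b ^ 2) * (cos a ^ 2 / (sin a ^ 2 + b ^ 2 * cos a ^ 2)) + 1) =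
      ∫ a in -π..π, (sin a ^ 2 + b ^ 2 * cos a ^ 2)⁻¹ := by
    refine intervalIntegral.integral_congr fun a _ => ?_
    have := sin_sq_add_sq_mul_cos_sq_pos hb.ne' a
    field_simp
    linear_combination sin_sq_add_cos_sq a
  rw [integral_inv_sin_sq_add_sq_mul_cos_sq hb, intervalIntegral.integral_add
    (((continuous_div_sin_sq_add_sq_mul_cos_sq hb.ne' (by fun_prop)).const_mul _).intervalIntegrable
      _ _) (by simp), intervalIntegral.integral_const_mul] at hlin
  simp only [intervalIntegral.integral_const, smul_eq_mul, mul_one] at hlin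
  have hb₁' : 1 - b ^ 2 ≠ 0 := by
    rw [← one_pow 2, sq_sub_sq]
    exact mul_ne_zero (by positivity) (sub_ne_zero.2 hb₁.symm)
  refine mul_left_cancel₀ hb₁' ?_
  rw [eq_sub_of_add_eq hlin]
  field_simp
  ring

lemma integral_sin_sq_div (hb : 0 < b) (hb₁ : b ≠ 1) :
    ∫ a in -π..π, sin a ^ 2 / (sin a ^ 2 + b ^ 2 * cos a ^ 2) = 2 * π / (1 + b) := by
  have hlin (a : ℝ) : sin a ^ 2 / (sin a ^ 2 + b ^ 2 * cos a ^ 2) =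
      1 - b ^ 2 * (cos a ^ 2 / (sin a ^ 2 + b ^ 2 * cos a ^ 2)) := by
    have := sin_sq_add_sq_mul_cos_sq_pos hb.ne' a
    field_simp
    ring
  simp only [hlin]
  rw [intervalIntegral.integral_sub (by simp)
    (((continuous_div_sin_sq_add_sq_mul_cos_sq hb.ne' (by fun_prop)).const_mul _).intervalIntegrable
      _ _), intervalIntegral.integral_const_mul, integral_cos_sq_div hb hb₁]
  simp only [intervalIntegral.integral_const, smul_eq_mul, mul_one]
  field_simp
  ring

lemma integral_sin_mul_cos_div (b : ℝ) :
    ∫ a in -π..π, sin a * cos a / (sin a ^ 2 + b ^ 2 * cos a ^ 2) = 0 :=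
  integral_eq_zero_of_odd (fun a => by simp [neg_div]) π

/-- The signed distance at which the line from `x` with direction `(cos a, sin a)` meets the
ellipse `x₀² + (x₁ / b)² = 1` again, for `x` on that ellipse. -/
def ellipseExitDistance (b : ℝ) (x : Pt) (a : ℝ) : ℝ :=
  -2 * (b ^ 2 * x 0 * cos a + x 1 * sin a) / (sin a ^ 2 + b ^ 2 * cos a ^ 2)

lemma continuous_ellipseExitDistance (hb : b ≠ 0) (x : Pt) :
    Continuous (ellipseExitDistance b x) :=
  continuous_div_sin_sq_add_sq_mul_cos_sq hb (by fun_prop)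

lemma antiperiodic_ellipseExitDistance (b : ℝ) (x : Pt) :
    Function.Antiperiodic (ellipseExitDistance b x) π := fun a => by
  simp only [ellipseExitDistance, cos_add_pi, sin_add_pi, neg_sq]; ring

lemma add_smul_mem_openEllipse_iff (hb : b ≠ 0) {x : Pt} (hx : x ∈ frontier (openEllipse b))
    (a : ℝ) {r : ℝ} (hr : 0 < r) :
    x + r • pt (cos a) (sin a) ∈ openEllipse b ↔ r < ellipseExitDistance b x a := by
  rw [mem_frontier_openEllipse] at hx
  have hdiff : (x 0 + r * cos a) ^ 2 + ((x 1 + r * sin a) / b) ^ 2 - 1 = r / b ^ 2 *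
      (r * (sin a ^ 2 + b ^ 2 * cos a ^ 2) - -2 * (b ^ 2 * x 0 * cos a + x 1 * sin a)) := by
    rw [← hx]; field_simp; ring
  change (x 0 + r * cos a) ^ 2 + ((x 1 + r * sin a) / b) ^ 2 < 1 ↔ _
  rw [ellipseExitDistance, lt_div_iff₀ (sin_sq_add_sq_mul_cos_sq_pos hb a), ← sub_neg, hdiff,
    ← smul_eq_mul, smul_neg_iff_of_pos_left (by positivity), sub_neg]

lemma integral_ellipseExitDistance_smul (hb : 0 < b) (hb₁ : b ≠ 1) (x : Pt) :
    ∫ a in -π..π, ellipseExitDistance b x a • pt (cos a) (sin a) =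
      (-(4 * π) / (1 + b)) • pt (b * x 0) (x 1) := by
  have hcont {f : ℝ → ℝ} (hf : Continuous f) (c : ℝ) :
      IntervalIntegrable (fun a => c * (f a / (sin a ^ 2 + b ^ 2 * cos a ^ 2))) volume (-π) π :=
    ((continuous_div_sin_sq_add_sq_mul_cos_sq hb.ne' hf).const_mul c).intervalIntegrable _ _
  have hvec (a : ℝ) : ellipseExitDistance b x a • pt (cos a) (sin a) = pt
      (-2 * (b ^ 2 * x 0) * (cos a ^ 2 / (sin a ^ 2 + b ^ 2 * cos a ^ 2)) +
        -2 * x 1 * (sin a * cos a / (sin a ^ 2 + b ^ 2 * cos a ^ 2)))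
      (-2 * (b ^ 2 * x 0) * (sin a * cos a / (sin a ^ 2 + b ^ 2 * cos a ^ 2)) +
        -2 * x 1 * (sin a ^ 2 / (sin a ^ 2 + b ^ 2 * cos a ^ 2))) := by
    ext i; fin_cases i <;> simp [ellipseExitDistance] <;> ring
  have hcc := hcont (f := fun a => cos a ^ 2) (by fun_prop)
  have hsc := hcont (f := fun a => sin a * cos a) (by fun_prop)
  have hss := hcont (f := fun a => sin a ^ 2) (by fun_prop)
  simp only [hvec]
  rw [intervalIntegral_pt (by linarith [pi_pos]) ((hcc _).add (hsc _)) ((hsc _).add (hss _)),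
    intervalIntegral.integral_add (hcc _) (hsc _), intervalIntegral.integral_add (hsc _) (hss _)]
  simp only [intervalIntegral.integral_const_mul, integral_cos_sq_div hb hb₁,
    integral_sin_sq_div hb hb₁, integral_sin_mul_cos_div]
  ext i; fin_cases i <;> simp <;> field_simp <;> ring

lemma setIntegral_regLogGradient_openEllipse (hb : 0 < b) (hb₁ : b ≠ 1) {x : Pt}
    (hx : x ∈ frontier (openEllipse b)) :
    ∫ y in openEllipse b, regLogGradient 0 (x - y) = (2 * π / (1 + b)) • pt (b * x 0) (x 1) := by
  have hanti : Function.Antiperiodic (fun a => pt (cos a) (sin a)) π := fun a => by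
    ext i; fin_cases i <;> simp
  rw [setIntegral_regLogGradient_of_radial (isOpen_openEllipse b).measurableSet
    (continuous_ellipseExitDistance hb.ne' x)
    (fun a r hr => add_smul_mem_openEllipse_iff hb.ne' hx a hr),
    integral_posPart_smul_of_antiperiodic (continuous_ellipseExitDistance hb.ne' x)
      (antiperiodic_ellipseExitDistance b x) (continuous_pt continuous_cos continuous_sin) hanti,
    integral_ellipseExitDistance_smul hb hb₁, smul_smul, ← neg_smul]
  congr 1; ring

lemma isBounded_openEllipse (hb : b ≠ 0) : Bornology.IsBounded (openEllipse b) := by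
  refine (Metric.isBounded_closedBall (x := (0 : Pt)) (r := √(1 + b ^ 2))).subset fun x hx => ?_
  have hx : x 0 ^ 2 + (x 1 / b) ^ 2 < 1 := hx
  rw [mem_closedBall_zero_iff, ← pt_eta x, norm_pt]
  have hx₁ : x 1 ^ 2 ≤ b ^ 2 := by
    have : (x 1 / b) ^ 2 ≤ 1 := by linarith [sq_nonneg (x 0)]
    rwa [div_pow, div_le_one (by positivity)] at this
  gcongr
  linarith [sq_nonneg (x 1 / b)]

lemma tanh_pos_of_pos {ξ : ℝ} (hξ : 0 < ξ) : 0 < tanh ξ := by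
  rw [tanh_eq_sinh_div_cosh]
  exact div_pos (sinh_pos_iff.2 hξ) (cosh_pos ξ)

lemma hasGradientAt_Ψell {ξ : ℝ} (hξ : 0 < ξ) {x : Pt} (hx : x ∈ frontier (Eell ξ)) :
    HasGradientAt (Ψell ξ) (((1 + tanh ξ) ^ 2)⁻¹ • pt (tanh ξ ^ 2 * x 0) (x 1)) x := by
  have hb := tanh_pos_of_pos hξ
  have hpot : HasGradientAt (fun x => ∫ y in Eell ξ, log ‖x - y‖)
      ((2 * π / (1 + tanh ξ)) • pt (tanh ξ * x 0) (x 1)) x := by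
    rw [← setIntegral_regLogGradient_openEllipse hb (tanh_lt_one ξ).ne hx]
    exact hasGradientAt_integral_log_norm_sub finrank_euclideanSpace_fin
      (isBounded_openEllipse hb.ne') x
  rw [hasGradientAt_iff_hasFDerivAt] at hpot ⊢
  have hrot := ((hasFDerivAt_id x).norm_sq.const_mul (Ωell ξ / 2))
  refine ((hpot.const_mul (1 / (2 * π))).sub (hrot.congr_of_eventuallyEq
    (.of_forall fun x => ?_))).congr_fderiv ?_
  · simp only [id]; ring
  · ext v
    simp only [Ωell, id_eq, ContinuousLinearMap.comp_id, sub_apply,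
      smul_apply, InnerProductSpace.toDual_apply_apply, map_smul,
      PiLp.inner_apply, RCLike.inner_apply, conj_trivial, Fin.sum_univ_two, pt_apply_zero,
      pt_apply_one, smul_eq_mul, coe_innerSL_apply, nsmul_eq_mul, Nat.cast_ofNat]
    field_simp
    ring

lemma norm_gradient_Ψell {ξ : ℝ} (hξ : 0 < ξ) (t : ℝ) :
    ‖gradient (Ψell ξ) (ellipseCurve (tanh ξ) t)‖ =
      tanh ξ / (1 + tanh ξ) ^ 2 * ellipseSpeed (tanh ξ) t := by
  have hb := tanh_pos_of_pos hξ
  have hvec : pt (tanh ξ ^ 2 * cos t) (tanh ξ * sin t) = tanh ξ • pt (tanh ξ * cos t) (sin t) := by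
    ext i; fin_cases i <;> simp [pow_two, mul_assoc]
  rw [(hasGradientAt_Ψell hξ (ellipseCurve_mem_frontier hb.ne' t)).gradient, ellipseCurve,
    pt_apply_zero, pt_apply_one, hvec, smul_smul, norm_smul, norm_pt, ellipseSpeed,
    norm_of_nonneg (by positivity), mul_pow, add_comm (_ * _), inv_mul_eq_div]

end EllipsePotential

section CircleLogKernel

/-- The logarithmic kernel `log |1 - r e^{it}|` of the circle. In the eccentric angle, the
logarithmic kernel of an ellipse is a sum of two of these: see `log_norm_ellipseCurve_sub`. -/
def circleLogKernel (r t : ℝ) : ℝ := log ‖(1 : ℂ) - r * Complex.exp (t * Complex.I)‖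

lemma norm_one_sub_mul_exp_mul_I_sq (r t : ℝ) :
    ‖(1 : ℂ) - r * Complex.exp (t * Complex.I)‖ ^ 2 = 1 + r ^ 2 - 2 * r * cos t := by
  rw [← Complex.normSq_eq_norm_sq, Complex.normSq_apply, Complex.sub_re, Complex.sub_im,
    Complex.re_ofReal_mul, Complex.im_ofReal_mul, Complex.exp_ofReal_mul_I_re,
    Complex.exp_ofReal_mul_I_im, Complex.one_re, Complex.one_im]
  linear_combination r ^ 2 * sin_sq_add_cos_sq t

lemma norm_one_sub_mul_exp_mul_I (r t : ℝ) :
    ‖(1 : ℂ) - r * Complex.exp (t * Complex.I)‖ = √(1 + r ^ 2 - 2 * r * cos t) := by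
  rw [← norm_one_sub_mul_exp_mul_I_sq, sqrt_sq (norm_nonneg _)]

lemma norm_one_sub_exp_mul_I (t : ℝ) :
    ‖(1 : ℂ) - Complex.exp (t * Complex.I)‖ = 2 * |sin (t / 2)| := by
  rw [norm_sub_rev, mul_comm (t : ℂ), Complex.norm_exp_I_mul_ofReal_sub_one, norm_mul,
    Real.norm_two, Real.norm_eq_abs]

lemma circleLogKernel_one (t : ℝ) : circleLogKernel 1 t = log (2 * |sin (t / 2)|) := by
  rw [circleLogKernel, Complex.ofReal_one, one_mul, norm_one_sub_exp_mul_I]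

lemma circleLogKernel_periodic (r : ℝ) : (circleLogKernel r).Periodic (2 * π) := fun t => by
  rw [circleLogKernel, circleLogKernel, norm_one_sub_mul_exp_mul_I, norm_one_sub_mul_exp_mul_I,
    cos_add_two_pi]

lemma circleLogKernel_even (r : ℝ) : (circleLogKernel r).Even := fun t => by
  rw [circleLogKernel, circleLogKernel, norm_one_sub_mul_exp_mul_I, norm_one_sub_mul_exp_mul_I,
    cos_neg]

lemma intervalIntegrable_circleLogKernel (r a b : ℝ) :
    IntervalIntegrable (circleLogKernel r) volume a b := by
  refine (circleLogKernel_periodic r).intervalIntegrable₀ two_pi_pos.ne' ?_ a b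
  have h : CircleIntegrable (fun z => log ‖z - 1‖) 0 r := circleIntegrable_log_norm_sub_const r
  refine h.congr fun t _ => ?_
  rw [circleLogKernel, circleMap, zero_add, norm_sub_rev]

lemma ae_sin_half_ne_zero : ∀ᵐ t : ℝ, sin (t / 2) ≠ 0 := by
  refine ((countable_range fun n : ℤ => 2 * (n * π)).mono fun t ht => ?_).measure_zero volume
  obtain ⟨n, hn⟩ := sin_eq_zero_iff.mp (not_not.mp ht)
  exact ⟨n, by linarith⟩

lemma ae_sin_half_sub_ne_zero (s : ℝ) : ∀ᵐ t : ℝ, sin ((s - t) / 2) ≠ 0 :=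
  (Measure.measurePreserving_sub_left volume s).quasiMeasurePreserving.ae ae_sin_half_ne_zero

lemma hasSum_circleLogKernel {r : ℝ} (h0 : 0 ≤ r) (h1 : r < 1) (t : ℝ) :
    HasSum (fun k : ℕ => r ^ k / k * cos (k * t)) (-circleLogKernel r t) := by
  have hz : ‖(r : ℂ) * Complex.exp (t * Complex.I)‖ < 1 := by
    rwa [norm_mul, Complex.norm_exp_ofReal_mul_I, mul_one, Complex.norm_of_nonneg h0]
  have h := Complex.hasSum_re (Complex.hasSum_taylorSeries_neg_log hz)
  rw [Complex.neg_re, Complex.log_re] at h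
  refine h.congr_fun fun k => ?_
  rw [Complex.div_natCast_re, mul_pow, ← Complex.ofReal_pow, Complex.re_ofReal_mul,
    ← Complex.exp_nat_mul, ← mul_assoc, ← Complex.ofReal_natCast, ← Complex.ofReal_mul,
    Complex.exp_ofReal_mul_I_re, div_mul_eq_mul_div]

lemma integral_cos_int_mul {c : ℤ} (hc : c ≠ 0) : ∫ t in -π..π, cos (c * t) = 0 := by
  rw [intervalIntegral.integral_comp_mul_left (f := cos) (Int.cast_ne_zero.mpr hc), integral_cos,
    mul_neg, sin_neg, sin_int_mul_pi, neg_zero, sub_zero, smul_zero]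

lemma integral_cos_nat_mul_cos {k : ℕ} (hk : k ≠ 0) (n : ℕ) :
    ∫ t in -π..π, cos (k * t) * cos (n * t) = if k = n then π else 0 := by
  have product_to_sum : ∀ t : ℝ, cos (k * t) * cos (n * t) =
      (cos (((k - n : ℤ) : ℝ) * t) + cos (((k + n : ℤ) : ℝ) * t)) / 2 := fun t => by
    push_cast
    rw [sub_mul, add_mul, cos_sub, cos_add]
    ring
  have hcos : ∀ c : ℝ, IntervalIntegrable (fun t => cos (c * t)) volume (-π) π := fun c =>
    Continuous.intervalIntegrable (by fun_prop) _ _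
  simp only [product_to_sum]
  rw [intervalIntegral.integral_div, intervalIntegral.integral_add (hcos _) (hcos _),
    integral_cos_int_mul (c := k + n) (by omega), add_zero]
  split_ifs with h
  · simp [h]
  · rw [integral_cos_int_mul (by omega), zero_div]

/- The constant term of the logarithmic series vanishes, so `n = 0` is covered with the value
`r ^ 0 / 0 = 0`. -/
lemma integral_circleLogKernel_mul_cos_of_lt_one {r : ℝ} (h0 : 0 ≤ r) (h1 : r < 1) (n : ℕ) :
    ∫ t in -π..π, circleLogKernel r t * cos (n * t) = -(π * (r ^ n / n)) := by
  have hbound (k : ℕ) (t : ℝ) : ‖r ^ k / k * cos (k * t) * cos (n * t)‖ ≤ r ^ k := by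
    have hcoeff : ‖r ^ k / (k : ℝ)‖ ≤ r ^ k := by
      rw [Real.norm_of_nonneg (by positivity)]
      rcases k.eq_zero_or_pos with rfl | hk
      · simp
      · exact div_le_self (by positivity) (by exact_mod_cast hk)
    rw [mul_assoc, norm_mul]
    refine (mul_le_of_le_one_right (norm_nonneg _) ?_).trans hcoeff
    rw [norm_mul]
    exact mul_le_one₀ (abs_cos_le_one _) (norm_nonneg _) (abs_cos_le_one _)
  have hterm (k : ℕ) : ∫ t in -π..π, r ^ k / k * cos (k * t) * cos (n * t) =
      if k = n then π * (r ^ n / n) else 0 := by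
    simp only [mul_assoc]
    rw [intervalIntegral.integral_const_mul]
    rcases eq_or_ne k 0 with rfl | hk
    · rcases eq_or_ne 0 n with rfl | hn
      · simp
      · simp [hn]
    · rw [integral_cos_nat_mul_cos hk]
      split_ifs with h
      · rw [h, mul_comm]
      · rw [mul_zero]
  have h := intervalIntegral.hasSum_integral_of_dominated_convergence (μ := volume) (a := -π)
    (b := π) (F := fun (k : ℕ) t => r ^ k / k * cos (k * t) * cos (n * t))
    (fun k _ => r ^ k) (fun k => Continuous.aestronglyMeasurable (by fun_prop))
    (fun k => .of_forall fun t _ => hbound k t)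
    (.of_forall fun t _ => summable_geometric_of_lt_one h0 h1) intervalIntegrable_const
    (.of_forall fun t _ => (hasSum_circleLogKernel h0 h1 t).mul_right (cos (n * t)))
  simp only [hterm, neg_mul, intervalIntegral.integral_neg] at h
  exact neg_eq_iff_eq_neg.mp (h.unique (hasSum_ite_eq n _))

lemma norm_one_sub_le_two_mul {u : ℂ} (hu : ‖u‖ ≤ 1) {r : ℝ} (h0 : 0 ≤ r) (h1 : r ≤ 1) :
    ‖1 - u‖ ≤ 2 * ‖1 - r * u‖ := by
  have hdist : ‖((1 - r : ℝ) : ℂ) * u‖ ≤ 1 - r := by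
    rw [norm_mul, Complex.norm_of_nonneg (sub_nonneg.mpr h1)]
    exact mul_le_of_le_one_right (sub_nonneg.mpr h1) hu
  have hlower : 1 - r ≤ ‖1 - r * u‖ := by
    have := norm_sub_norm_le (1 : ℂ) (r * u)
    rw [norm_one, norm_mul, Complex.norm_of_nonneg h0] at this
    linarith [mul_le_of_le_one_right h0 hu]
  calc ‖1 - u‖ = ‖(1 - r * u) - ((1 - r : ℝ) : ℂ) * u‖ := by
        congr 1
        push_cast
        ring
    _ ≤ ‖1 - r * u‖ + ‖((1 - r : ℝ) : ℂ) * u‖ := norm_sub_le _ _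
    _ ≤ 2 * ‖1 - r * u‖ := by linarith

lemma abs_circleLogKernel_le {r t : ℝ} (h0 : 0 ≤ r) (h1 : r ≤ 1) (ht : sin (t / 2) ≠ 0) :
    |circleLogKernel r t| ≤ log 2 + |circleLogKernel 1 t| := by
  have hnorm := Complex.norm_exp_ofReal_mul_I t
  have hpos : 0 < ‖(1 : ℂ) - Complex.exp (t * Complex.I)‖ := by
    rw [norm_one_sub_exp_mul_I]
    positivity
  have hlow := norm_one_sub_le_two_mul hnorm.le h0 h1
  have hpos' : 0 < ‖(1 : ℂ) - r * Complex.exp (t * Complex.I)‖ := by linarith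
  have hup : ‖(1 : ℂ) - r * Complex.exp (t * Complex.I)‖ ≤ 2 := by
    refine (norm_sub_le _ _).trans ?_
    rw [norm_one, norm_mul, hnorm, Complex.norm_of_nonneg h0]
    linarith
  have hlog_low : circleLogKernel 1 t ≤ log 2 + circleLogKernel r t := by
    rw [circleLogKernel, circleLogKernel, Complex.ofReal_one, one_mul,
      ← log_mul two_ne_zero hpos'.ne']
    exact log_le_log hpos hlow
  have hlog_up : circleLogKernel r t ≤ log 2 := log_le_log hpos' hup
  rw [abs_le]
  constructor <;> linarith [neg_abs_le (circleLogKernel 1 t), abs_nonneg (circleLogKernel 1 t)]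

lemma continuousAt_circleLogKernel_one {t : ℝ} (ht : sin (t / 2) ≠ 0) :
    ContinuousAt (fun r => circleLogKernel r t) 1 := by
  unfold circleLogKernel
  refine ContinuousAt.log (by fun_prop) ?_
  rw [Complex.ofReal_one, one_mul, norm_one_sub_exp_mul_I]
  positivity

lemma tendsto_integral_circleLogKernel_mul_cos (n : ℕ) :
    Tendsto (fun r => ∫ t in -π..π, circleLogKernel r t * cos (n * t)) (𝓝[Ioo 0 1] 1)
      (𝓝 (∫ t in -π..π, circleLogKernel 1 t * cos (n * t))) := by
  refine intervalIntegral.tendsto_integral_filter_of_dominated_convergence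
    (fun t => log 2 + |circleLogKernel 1 t|) ?_ ?_ ?_ ?_
  · refine .of_forall fun r => Measurable.aestronglyMeasurable ?_
    unfold circleLogKernel
    fun_prop
  · filter_upwards [self_mem_nhdsWithin] with r hr
    filter_upwards [ae_sin_half_ne_zero] with t ht _
    rw [norm_mul]
    exact (mul_le_of_le_one_right (norm_nonneg _) (abs_cos_le_one _)).trans
      (abs_circleLogKernel_le hr.1.le hr.2.le ht)
  · exact intervalIntegrable_const.add (intervalIntegrable_circleLogKernel 1 _ _).abs
  · filter_upwards [ae_sin_half_ne_zero] with t ht _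
    exact ((continuousAt_circleLogKernel_one ht).mul continuousAt_const).mono_left
      nhdsWithin_le_nhds

lemma integral_circleLogKernel_mul_cos {r : ℝ} (h0 : 0 ≤ r) (h1 : r ≤ 1) (n : ℕ) :
    ∫ t in -π..π, circleLogKernel r t * cos (n * t) = -(π * (r ^ n / n)) := by
  rcases h1.lt_or_eq with h1 | rfl
  · exact integral_circleLogKernel_mul_cos_of_lt_one h0 h1 n
  have hlim : Tendsto (fun r : ℝ => -(π * (r ^ n / n))) (𝓝[Ioo 0 1] 1) (𝓝 (-(π * (1 ^ n / n)))) :=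
    (Continuous.tendsto (by fun_prop) 1).mono_left nhdsWithin_le_nhds
  have : (𝓝[Ioo 0 1] (1 : ℝ)).NeBot := by
    rw [nhdsWithin_Ioo_eq_nhdsLT zero_lt_one]
    infer_instance
  refine tendsto_nhds_unique (tendsto_integral_circleLogKernel_mul_cos n) (hlim.congr' ?_)
  filter_upwards [self_mem_nhdsWithin] with r hr
  exact (integral_circleLogKernel_mul_cos_of_lt_one hr.1.le hr.2 n).symm

/-- The third flattening `q = (1 - b) / (1 + b)` of an ellipse with semi-axes `1` and `b`. -/
def thirdFlattening (b : ℝ) : ℝ := (1 - b) / (1 + b)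

lemma ellipseSpeed_half {b : ℝ} (hb : 0 < b) (t : ℝ) :
    ellipseSpeed b (t / 2) = (1 + b) / 2 *
      ‖(1 : ℂ) - thirdFlattening b * Complex.exp (t * Complex.I)‖ := by
  have hcos := cos_two_mul (t / 2)
  rw [mul_div_cancel₀ _ two_ne_zero] at hcos
  rw [ellipseSpeed, ← sqrt_sq (x := (1 + b) / 2 * _) (by positivity), mul_pow,
    norm_one_sub_mul_exp_mul_I_sq, hcos, sin_sq, thirdFlattening]
  congr 1
  field_simp
  ring

lemma log_norm_ellipseCurve_sub {b s t : ℝ} (hb : 0 < b) (hst : sin ((s - t) / 2) ≠ 0) :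
    log ‖ellipseCurve b s - ellipseCurve b t‖ = circleLogKernel 1 (s - t) + log ((1 + b) / 2) +
      circleLogKernel (thirdFlattening b) (s + t) := by
  have hspeed := ellipseSpeed_pos hb.ne' ((s + t) / 2)
  rw [norm_ellipseCurve_sub, log_mul (by positivity) hspeed.ne', ← circleLogKernel_one,
    add_assoc]
  rw [ellipseSpeed_half hb] at hspeed ⊢
  rw [log_mul (by positivity) (right_ne_zero_of_mul hspeed.ne')]
  rfl

end CircleLogKernel

section CircleConvolution

variable {T : ℝ} [Fact (0 < T)]

lemma fourierCoeff_integral_mul_sub {f g : AddCircle T → ℂ}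
    (hf : Integrable f AddCircle.haarAddCircle) (hg : Integrable g AddCircle.haarAddCircle)
    (n : ℤ) :
    fourierCoeff (fun x => ∫ t, f t * g (x - t) ∂AddCircle.haarAddCircle) n =
      fourierCoeff f n * fourierCoeff g n := by
  have h := integral_convolution (ContinuousLinearMap.mul ℝ ℂ) (hf.fourier_smul (-n))
    (hg.fourier_smul (-n))
  simp only [convolution_def, ContinuousLinearMap.mul_apply', smul_eq_mul] at h
  simp only [fourierCoeff, smul_eq_mul, ← h, ← integral_const_mul]
  refine integral_congr_ae (.of_forall fun x => integral_congr_ae (.of_forall fun t => ?_))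
  have hchar : (fourier (-n) x : ℂ) = fourier (-n) t * fourier (-n) (x - t) := by
    rw [fourier_apply, fourier_apply, fourier_apply, ← Circle.coe_mul, ← AddCircle.toCircle_add,
      ← smul_add, add_sub_cancel]
  simp only [hchar]
  ring

lemma eq_zero_of_fourierCoeff_eq_zero {f : AddCircle T → ℂ} (hf : Continuous f)
    (h : ∀ n, fourierCoeff f n = 0) : f = 0 := by
  have hcoeff : fourierCoeff (⟨f, hf⟩ : C(AddCircle T, ℂ)) = 0 := funext h
  ext x
  have hsum := has_pointwise_sum_fourier_series_of_summable (f := ⟨f, hf⟩)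
    (hcoeff ▸ summable_zero) x
  simp only [hcoeff, Pi.zero_apply, zero_smul] at hsum
  exact hsum.unique hasSum_zero

lemma eq_zero_of_add_mul_integral_mul_sub_eq_zero {f g : AddCircle T → ℂ} (hf : Continuous f)
    (hg : Integrable g AddCircle.haarAddCircle) {c : ℂ}
    (heq : ∀ x, f x + c * ∫ t, f t * g (x - t) ∂AddCircle.haarAddCircle = 0)
    (hsymbol : ∀ n, 1 + c * fourierCoeff g n ≠ 0) : f = 0 := by
  refine eq_zero_of_fourierCoeff_eq_zero hf fun n => ?_
  have hfi : Integrable f AddCircle.haarAddCircle :=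
    hf.integrable_of_hasCompactSupport (.of_compactSpace f)
  have hfixed : f = fun x => -c * ∫ t, f t * g (x - t) ∂AddCircle.haarAddCircle :=
    funext fun x => by linear_combination heq x
  have hcoeff : fourierCoeff f n = -c * (fourierCoeff f n * fourierCoeff g n) := by
    conv_lhs => rw [hfixed]
    rw [fourierCoeff.const_mul, fourierCoeff_integral_mul_sub hfi hg]
  refine (mul_eq_zero.mp ?_).resolve_right (hsymbol n)
  linear_combination hcoeff

lemma integrable_periodic_lift {f : ℝ → ℂ} (h : f.Periodic T) (a : ℝ)
    (hf : IntervalIntegrable f volume a (a + T)) :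
    Integrable (h.lift : AddCircle T → ℂ) AddCircle.haarAddCircle := by
  have hlift : h.lift = AddCircle.liftIoc T a f := by
    ext x
    conv_lhs => rw [← (AddCircle.equivIoc T a).symm_apply_apply x]
    exact h.lift_coe _
  rw [hlift, ← memLp_one_iff_integrable, memLp_haarAddCircle_iff]
  exact (memLp_one_iff_integrable.mpr hf.1).memLp_liftIoc

end CircleConvolution

section EvenConvolution

instance : Fact (0 < 2 * π) := ⟨two_pi_pos⟩

lemma fourierCoeff_lift_of_even {G : ℝ → ℝ} (hG : (fun t => (G t : ℂ)).Periodic (2 * π))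
    (hGi : IntervalIntegrable G volume (-π) π) (hGe : G.Even) (n : ℤ) :
    fourierCoeff (hG.lift : AddCircle (2 * π) → ℂ) n =
      (1 / (2 * π) * ∫ t in -π..π, G t * cos (n * t) : ℝ) := by
  have hexp (t : ℝ) : fourier (-n) (t : AddCircle (2 * π)) • hG.lift t =
      ((G t * cos (n * t) : ℝ) : ℂ) - ((G t * sin (n * t) : ℝ) : ℂ) * Complex.I := by
    have harg : 2 * π * Complex.I * ((-n : ℤ) : ℂ) * t / ((2 * π : ℝ) : ℂ) =
        ((-(n * t) : ℝ) : ℂ) * Complex.I := by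
      have := Complex.ofReal_ne_zero.mpr pi_ne_zero
      push_cast
      field_simp
    rw [hG.lift_coe, fourier_coe_apply, harg, Complex.exp_mul_I, ← Complex.ofReal_cos,
      ← Complex.ofReal_sin, cos_neg, sin_neg, smul_eq_mul]
    push_cast
    ring
  have hmul {u : ℝ → ℝ} (hu : Continuous u) :
      IntervalIntegrable (fun t => ((G t * u t : ℝ) : ℂ)) volume (-π) π :=
    let h := hGi.mul_continuousOn hu.continuousOn
    ⟨h.1.ofReal, h.2.ofReal⟩
  have hodd : ∫ t in -π..π, G t * sin (n * t) = 0 :=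
    integral_eq_zero_of_odd (fun t => by rw [hGe, mul_neg, sin_neg, mul_neg]) π
  rw [fourierCoeff_eq_intervalIntegral _ n (-π), show -π + 2 * π = π by ring]
  simp only [hexp]
  rw [intervalIntegral.integral_sub (hmul (by fun_prop)) ((hmul (by fun_prop)).mul_const _),
    intervalIntegral.integral_mul_const, intervalIntegral.integral_ofReal,
    intervalIntegral.integral_ofReal, hodd, Complex.ofReal_zero,
    zero_mul, sub_zero, Complex.real_smul, ← Complex.ofReal_mul]

lemma integral_haarAddCircle_lift_mul_lift_sub {g G : ℝ → ℝ}
    (hg : (fun t => (g t : ℂ)).Periodic (2 * π)) (hG : (fun t => (G t : ℂ)).Periodic (2 * π))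
    (s : ℝ) :
    ∫ t : AddCircle (2 * π), hg.lift t * hG.lift ((s : AddCircle (2 * π)) - t)
        ∂AddCircle.haarAddCircle = (1 / (2 * π) * ∫ t in -π..π, g t * G (s - t) : ℝ) := by
  have hlift (t : ℝ) : hg.lift (t : AddCircle (2 * π)) *
      hG.lift ((s : AddCircle (2 * π)) - (t : AddCircle (2 * π))) = (g t * G (s - t) : ℝ) := by
    rw [← AddCircle.coe_sub, hg.lift_coe, hG.lift_coe, Complex.ofReal_mul]
  rw [AddCircle.integral_haarAddCircle, ← AddCircle.intervalIntegral_preimage (2 * π) (-π),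
    show -π + 2 * π = π by ring]
  simp only [hlift]
  rw [intervalIntegral.integral_ofReal, Complex.real_smul, ← Complex.ofReal_mul, one_div]

lemma eq_zero_of_add_mul_intervalIntegral_mul_sub_eq_zero {g G : ℝ → ℝ} {c : ℝ}
    (hg : g.Periodic (2 * π)) (hgc : Continuous g) (hG : G.Periodic (2 * π))
    (hGi : IntervalIntegrable G volume (-π) π) (hGe : G.Even)
    (heq : ∀ s, g s + c * (1 / (2 * π) * ∫ t in -π..π, g t * G (s - t)) = 0)
    (hsymbol : ∀ n : ℕ, 1 + c * (1 / (2 * π) * ∫ t in -π..π, G t * cos (n * t)) ≠ 0) : g = 0 := by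
  have hg' : (fun t => (g t : ℂ)).Periodic (2 * π) := hg.comp Complex.ofReal
  have hG' : (fun t => (G t : ℂ)).Periodic (2 * π) := hG.comp Complex.ofReal
  have hlift : hg'.lift = (0 : AddCircle (2 * π) → ℂ) := by
    refine eq_zero_of_add_mul_integral_mul_sub_eq_zero (c := c)
      (Continuous.quotient_liftOn' (by fun_prop) _)
      (integrable_periodic_lift hG' (-π) ?_) (fun x => ?_) fun n => ?_
    · rw [show -π + 2 * π = π by ring]
      exact ⟨hGi.1.ofReal, hGi.2.ofReal⟩
    · induction x using QuotientAddGroup.induction_on with | _ s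
      rw [integral_haarAddCircle_lift_mul_lift_sub, hg'.lift_coe]
      exact_mod_cast heq s
    · have hcos (t : ℝ) : cos (n * t) = cos (n.natAbs * t) := by
        rw [← cos_abs (n * t), ← cos_abs (n.natAbs * t), abs_mul, abs_mul, Nat.abs_cast,
          Nat.cast_natAbs, Int.cast_abs]
      rw [fourierCoeff_lift_of_even hG' hGi hGe]
      simp only [hcos]
      exact_mod_cast hsymbol n.natAbs
  ext s
  have := congrFun hlift s
  rw [hg'.lift_coe] at this
  exact Complex.ofReal_eq_zero.mp this

end EvenConvolution

section KirchhoffSymbol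

/-- The even kernel that represents, on even functions of the eccentric angle, the logarithmic
kernel of the ellipse with semi-axes `1` and `b` as a convolution. -/
def ellipseLogKernel (b t : ℝ) : ℝ :=
  circleLogKernel 1 t + log ((1 + b) / 2) + circleLogKernel (thirdFlattening b) t

lemma ellipseLogKernel_periodic (b : ℝ) : (ellipseLogKernel b).Periodic (2 * π) := fun t => by
  rw [ellipseLogKernel, ellipseLogKernel, circleLogKernel_periodic, circleLogKernel_periodic]

lemma ellipseLogKernel_even (b : ℝ) : (ellipseLogKernel b).Even := fun t => by
  rw [ellipseLogKernel, ellipseLogKernel, circleLogKernel_even, circleLogKernel_even]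

lemma intervalIntegrable_ellipseLogKernel (b u v : ℝ) :
    IntervalIntegrable (ellipseLogKernel b) volume u v :=
  ((intervalIntegrable_circleLogKernel 1 u v).add intervalIntegrable_const).add
    (intervalIntegrable_circleLogKernel _ u v)

lemma integral_mul_log_norm_ellipseCurve_sub {b : ℝ} (hb : 0 < b) {g : ℝ → ℝ} (hg : Continuous g)
    (hge : g.Even) (s : ℝ) :
    ∫ t in -π..π, g t * log ‖ellipseCurve b s - ellipseCurve b t‖ =
      ∫ t in -π..π, g t * ellipseLogKernel b (s - t) := by
  set q := thirdFlattening b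
  set c := log ((1 + b) / 2)
  have hsub (r : ℝ) :
      IntervalIntegrable (fun t => g t * circleLogKernel r (s - t)) volume (-π) π := by
    refine IntervalIntegrable.continuousOn_mul ?_ hg.continuousOn
    simpa using (intervalIntegrable_circleLogKernel r (s + π) (s - π)).comp_sub_left s
  have hreflect : (fun t => g (-t) * circleLogKernel q (s + -t)) =
      fun t => g t * circleLogKernel q (s - t) :=
    funext fun t => by rw [hge, sub_eq_add_neg]
  have hadd : IntervalIntegrable (fun t => g t * circleLogKernel q (s + t)) volume (-π) π := by
    refine IntervalIntegrable.continuousOn_mul ?_ hg.continuousOn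
    simpa using (intervalIntegrable_circleLogKernel q (s - π) (s + π)).comp_add_left s
  have hconst : IntervalIntegrable (fun t => g t * c) volume (-π) π :=
    Continuous.intervalIntegrable (by fun_prop) _ _
  calc ∫ t in -π..π, g t * log ‖ellipseCurve b s - ellipseCurve b t‖
      = ∫ t in -π..π, (g t * circleLogKernel 1 (s - t) + g t * c) +
          g t * circleLogKernel q (s + t) := by
        refine intervalIntegral.integral_congr_ae ?_
        filter_upwards [ae_sin_half_sub_ne_zero s] with t ht _
        rw [log_norm_ellipseCurve_sub hb ht, mul_add, mul_add]
    _ = (∫ t in -π..π, g t * circleLogKernel 1 (s - t) + g t * c) +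
          ∫ t in -π..π, g t * circleLogKernel q (s - t) := by
        rw [intervalIntegral.integral_add ((hsub 1).add hconst) hadd, ← hreflect,
          intervalIntegral.integral_comp_neg fun t => g t * circleLogKernel q (s + t), neg_neg]
    _ = ∫ t in -π..π, g t * ellipseLogKernel b (s - t) := by
        rw [← intervalIntegral.integral_add ((hsub 1).add hconst) (hsub q)]
        simp only [ellipseLogKernel, mul_add, q, c]

lemma thirdFlattening_mem_Ioo {b : ℝ} (hb : b ∈ Ioo 0 1) : thirdFlattening b ∈ Ioo 0 1 := by
  obtain ⟨h0, h1⟩ := hb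
  rw [thirdFlattening, mem_Ioo, lt_div_iff₀ (by linarith), div_lt_one (by linarith)]
  constructor <;> linarith

lemma injOn_thirdFlattening : InjOn thirdFlattening (Ioi 0) := fun x hx y hy h => by
  rw [mem_Ioi] at hx hy
  rw [thirdFlattening, thirdFlattening, div_eq_div_iff (by linarith) (by linarith)] at h
  linarith

lemma sq_one_add_div_eq {b : ℝ} (hb : 0 < b) :
    (1 + b) ^ 2 / b = 4 / (1 - thirdFlattening b ^ 2) := by
  have : 1 - thirdFlattening b ^ 2 = 4 * b / (1 + b) ^ 2 := by
    rw [thirdFlattening]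
    field_simp
    ring
  rw [this]
  field_simp

lemma one_add_div_two_eq {b : ℝ} (hb : 0 < b) : (1 + b) / 2 = (1 + thirdFlattening b)⁻¹ := by
  rw [thirdFlattening]
  field_simp
  ring

lemma integral_ellipseLogKernel_mul_cos {b : ℝ} (hb : b ∈ Ioo 0 1) (n : ℕ) :
    ∫ t in -π..π, ellipseLogKernel b t * cos (n * t) =
      -(π * (1 ^ n / n)) + log ((1 + b) / 2) * (∫ t in -π..π, cos (n * t)) +
        -(π * (thirdFlattening b ^ n / n)) := by
  have hq := thirdFlattening_mem_Ioo hb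
  have hkernel (r : ℝ) :
      IntervalIntegrable (fun t => circleLogKernel r t * cos (n * t)) volume (-π) π :=
    (intervalIntegrable_circleLogKernel r _ _).mul_continuousOn (by fun_prop)
  have hconst : IntervalIntegrable (fun t => log ((1 + b) / 2) * cos (n * t)) volume (-π) π :=
    Continuous.intervalIntegrable (by fun_prop) _ _
  rw [← integral_circleLogKernel_mul_cos zero_le_one le_rfl,
    ← integral_circleLogKernel_mul_cos hq.1.le hq.2.le, ← intervalIntegral.integral_const_mul,
    ← intervalIntegral.integral_add (hkernel 1) hconst,
    ← intervalIntegral.integral_add ((hkernel 1).add hconst) (hkernel _)]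
  simp only [ellipseLogKernel, add_mul]

/-- The `n`-th cosine multiplier of the linearised operator on the ellipse with semi-axes `1` and
`b`. The factor `(1 + b) ^ 2 / b` is the ratio of the speed of `ellipseCurve b` to the norm of the
gradient of the stream function. -/
def kirchhoffSymbol (b : ℝ) (n : ℕ) : ℝ :=
  1 + (1 + b) ^ 2 / b * (1 / (2 * π) * ∫ t in -π..π, ellipseLogKernel b t * cos (n * t))

lemma kirchhoffSymbol_zero {b : ℝ} (hb : b ∈ Ioo 0 1) :
    kirchhoffSymbol b 0 =
      1 - 4 * log (1 + thirdFlattening b) / (1 - thirdFlattening b ^ 2) := by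
  rw [kirchhoffSymbol, integral_ellipseLogKernel_mul_cos hb, sq_one_add_div_eq hb.1,
    one_add_div_two_eq hb.1, log_inv]
  simp only [Nat.cast_zero, zero_mul, cos_zero, div_zero, mul_zero, neg_zero, zero_add, add_zero,
    intervalIntegral.integral_const, smul_eq_mul, sub_neg_eq_add, mul_one]
  field_simp
  ring

lemma kirchhoffSymbol_of_ne_zero {b : ℝ} (hb : b ∈ Ioo 0 1) {n : ℕ} (hn : n ≠ 0) :
    kirchhoffSymbol b n =
      1 - 2 * (1 + thirdFlattening b ^ n) / (n * (1 - thirdFlattening b ^ 2)) := by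
  have hcos : ∫ t in -π..π, cos (n * t) = 0 := by
    exact_mod_cast integral_cos_int_mul (c := n) (by exact_mod_cast hn)
  rw [kirchhoffSymbol, integral_ellipseLogKernel_mul_cos hb, sq_one_add_div_eq hb.1, hcos, one_pow]
  field_simp
  ring

lemma strictAntiOn_one_sub_sq_sub_log :
    StrictAntiOn (fun q => 1 - q ^ 2 - 4 * log (1 + q)) (Ici 0) :=
  fun x (hx : 0 ≤ x) y _ hxy => by
    have := log_lt_log (by linarith) (by linarith : 1 + x < 1 + y)
    have := pow_lt_pow_left₀ hxy hx two_ne_zero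
    simp only
    linarith

lemma countable_kirchhoffSymbol_eq_zero (n : ℕ) :
    {b ∈ Ioo 0 1 | kirchhoffSymbol b n = 0}.Countable := by
  have hsq {b : ℝ} (hb : b ∈ Ioo 0 1) : 1 - thirdFlattening b ^ 2 ≠ 0 :=
    have hq := thirdFlattening_mem_Ioo hb
    (sub_pos.mpr (pow_lt_one₀ hq.1.le hq.2 two_ne_zero)).ne'
  suffices ∃ Z : Set ℝ, Z.Countable ∧
      ∀ b ∈ Ioo 0 1, kirchhoffSymbol b n = 0 → thirdFlattening b ∈ Z by
    obtain ⟨Z, hZ, hmaps⟩ := this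
    exact MapsTo.countable_of_injOn (fun b hb => hmaps b hb.1 hb.2)
      (injOn_thirdFlattening.mono fun b hb => hb.1.1) hZ
  rcases eq_or_ne n 0 with rfl | hn
  · refine ⟨{q ∈ Ici 0 | 1 - q ^ 2 - 4 * log (1 + q) = 0}, Subsingleton.countable
      fun x hx y hy => strictAntiOn_one_sub_sq_sub_log.injOn hx.1 hy.1 (hx.2.trans hy.2.symm),
      fun b hb h => ⟨(thirdFlattening_mem_Ioo hb).1.le, ?_⟩⟩
    rw [kirchhoffSymbol_zero hb, sub_eq_zero, eq_div_iff (hsq hb), one_mul] at h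
    exact sub_eq_zero.mpr h
  · let p : Polynomial ℝ :=
      Polynomial.C (n : ℝ) * (1 - Polynomial.X ^ 2) - 2 * (1 + Polynomial.X ^ n)
    have hp : p ≠ 0 := fun h => by simpa [p] using congrArg (Polynomial.eval 1) h
    refine ⟨{q | p.IsRoot q}, (Polynomial.finite_setOfPred_isRoot hp).countable, fun b hb h => ?_⟩
    rw [kirchhoffSymbol_of_ne_zero hb hn, sub_eq_zero,
      eq_div_iff (mul_ne_zero (Nat.cast_ne_zero.mpr hn) (hsq hb)), one_mul] at h
    simpa [p, sub_eq_zero] using h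

end KirchhoffSymbol

section Nondegeneracy

lemma setIntegral_frontier_Eell_log_mul_div {ξ : ℝ} (hξ : 0 < ξ) (φ : Pt → ℝ) (s : ℝ) :
    ∫ y in frontier (Eell ξ), (1 / (2 * π)) * log ‖ellipseCurve (tanh ξ) s - y‖ *
        (φ y / ‖gradient (Ψell ξ) y‖) ∂μH[1] =
      (1 + tanh ξ) ^ 2 / tanh ξ * (1 / (2 * π) * ∫ t in -π..π, φ (ellipseCurve (tanh ξ) t) *
        log ‖ellipseCurve (tanh ξ) s - ellipseCurve (tanh ξ) t‖) := by
  have hb := tanh_pos_of_pos hξ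
  refine (setIntegral_frontier_openEllipse hb.ne' _).trans ?_
  rw [← mul_assoc, ← intervalIntegral.integral_const_mul]
  refine intervalIntegral.integral_congr fun t _ => ?_
  have := ellipseSpeed_pos hb.ne' t
  simp only [norm_gradient_Ψell hξ]
  field_simp

theorem eq_zero_of_kirchhoffSymbol_ne_zero {ξ : ℝ} (hξ : 0 < ξ)
    (hsymbol : ∀ n, kirchhoffSymbol (tanh ξ) n ≠ 0) {φ : Pt → ℝ}
    (hφ : ContinuousOn φ (frontier (Eell ξ)))
    (hsymm : ∀ x ∈ frontier (Eell ξ), φ x = φ (pt (x 0) (-(x 1))))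
    (heq : ∀ x ∈ frontier (Eell ξ), φ x + ∫ y in frontier (Eell ξ),
      (1 / (2 * π)) * log ‖x - y‖ * (φ y / ‖gradient (Ψell ξ) y‖) ∂μH[1] = 0) :
    ∀ x ∈ frontier (Eell ξ), φ x = 0 := by
  have hb := tanh_pos_of_pos hξ
  have hmem := ellipseCurve_mem_frontier hb.ne'
  let g : ℝ → ℝ := fun t => φ (ellipseCurve (tanh ξ) t)
  have hgc : Continuous g := hφ.comp_continuous (continuous_ellipseCurve _) hmem
  have hge : g.Even := fun t => by
    refine Eq.trans ?_ (hsymm _ (hmem t)).symm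
    simp only [g, ellipseCurve, pt_apply_zero, pt_apply_one, cos_neg, sin_neg, mul_neg]
  have hgp : g.Periodic (2 * π) := fun t => by
    simp only [g, ellipseCurve, cos_add_two_pi, sin_add_two_pi]
  have hg : g = 0 := by
    refine eq_zero_of_add_mul_intervalIntegral_mul_sub_eq_zero hgp hgc
      (ellipseLogKernel_periodic _) (intervalIntegrable_ellipseLogKernel _ _ _)
      (ellipseLogKernel_even _) (fun s => ?_) hsymbol
    rw [← integral_mul_log_norm_ellipseCurve_sub hb hgc hge,
      ← setIntegral_frontier_Eell_log_mul_div hξ]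
    exact heq _ (hmem s)
  intro x hx
  obtain ⟨s, -, rfl⟩ := (frontier_openEllipse hb.ne').subset hx
  exact congrFun hg s

theorem kirchhoff_nondegeneracy_general :
    ∃ 𝒩 : Set ℝ, 𝒩.Countable ∧ 𝒩 ⊆ Set.Ioi 0 ∧
      ∀ ξ : ℝ, 0 < ξ → ξ ∉ 𝒩 →
        ∀ φ : Pt → ℝ, ContinuousOn φ (frontier (Eell ξ)) →
          (∀ x ∈ frontier (Eell ξ), φ x = φ (pt (x 0) (-(x 1)))) →
          (∀ x ∈ frontier (Eell ξ),
            φ x + ∫ y in frontier (Eell ξ),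
              (1 / (2 * π)) * Real.log ‖x - y‖ * (φ y / ‖gradient (Ψell ξ) y‖) ∂μH[1] = 0) →
          ∀ x ∈ frontier (Eell ξ), φ x = 0 := by
  have hzeros : {b ∈ Ioo 0 1 | ∃ n, kirchhoffSymbol b n = 0}.Countable := by
    simp only [← exists_and_left, ofPred_exists]
    exact countable_iUnion countable_kirchhoffSymbol_eq_zero
  refine ⟨Ioi 0 ∩ tanh ⁻¹' {b ∈ Ioo 0 1 | ∃ n, kirchhoffSymbol b n = 0},
    (hzeros.preimage tanh_injective).mono inter_subset_right, inter_subset_left,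
    fun ξ hξ hξN φ hφ hsymm heq => ?_⟩
  refine eq_zero_of_kirchhoffSymbol_ne_zero hξ (fun n hn => hξN ⟨hξ, ?_⟩) hφ hsymm heq
  exact ⟨⟨tanh_pos_of_pos hξ, tanh_lt_one ξ⟩, n, hn⟩

end Nondegeneracy

/-- **Nondegeneracy on Kirchhoff stream functions, II**: away from an at most
countable set of parameters `ξ`, the only symmetric continuous solution of the
kernel equation on `Σ^ξ` is zero. -/
theorem kirchhoff_nondegeneracy :
    ∃ 𝒩 : Set ℝ, 𝒩.Countable ∧ 𝒩 ⊆ Set.Ioi 0 ∧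
      ∀ ξ : ℝ, 0 < ξ → ξ ∉ 𝒩 →
        ∀ φ : Pt → ℝ, ContinuousOn φ (frontier (Eell ξ)) →
          (∀ x ∈ frontier (Eell ξ),
            φ x = φ (pt (x 0) (-(x 1))) ∧ φ x = φ (pt (-(x 0)) (-(x 1)))) →
          (∀ x ∈ frontier (Eell ξ),
            φ x + ∫ y in frontier (Eell ξ),
              (1 / (2 * π)) * Real.log ‖x - y‖ * (φ y / ‖gradient (Ψell ξ) y‖) ∂μH[1] = 0) →
          ∀ x ∈ frontier (Eell ξ), φ x = 0 := by
  obtain ⟨𝒩, hcount, hpos, h⟩ := kirchhoff_nondegeneracy_general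
  exact ⟨𝒩, hcount, hpos, fun ξ hξ hξ𝒩 φ hφ hsymm =>
    h ξ hξ hξ𝒩 φ hφ fun x hx => (hsymm x hx).1⟩
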